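/- arXiv:1404.1598 — 7 statements merged into one kernel-verified Lean document; each statement's English description precedes it below -/
import Mathlib

section
/- Let u ≥ 2 and let l_1,…,l_u be integers each ≥ 2. Then the rank of the direct product Sym(l_1) × ⋯ × Sym(l_u) equals u; that is, this group is generated by u elements but not by fewer than u elements. -/
open Function Set

/-- The rank of a group: the least cardinality of a generating subset. -/
noncomputable def grank (G : Type*) [Group G] : ℕ :=
  sInf {k | ∃ S : Set G, S.Finite ∧ S.ncard = k ∧ Subgroup.closure S = ⊤}

/-!
Signs give a surjection of `∏ i, Sym(l i)` onto the elementary abelian `2`-group `{±1} ^ u`, which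
has rank `u`; this is the lower bound. For the upper bound, each `Sym(l)` is generated by a
transposition `τ` and a permutation `σ` of odd order (a cycle of length `l` or `l - 1`, whichever is
odd). Let `g i` have `τ` in the `i`-th factor, `σ` in the cyclically next one and `1` elsewhere.
The two entries of `g i` commute and have coprime orders, so each of them is a power of `g i`.
Hence `g 1, …, g u` generate every factor.
-/

theorem grank_eq_rank (G : Type*) [Group G] [Group.FG G] : grank G = Group.rank G := by
  obtain ⟨S, hcard, hS⟩ := Group.rank_spec G
  have hmem : Group.rank G ∈ {k | ∃ S : Set G, S.Finite ∧ S.ncard = k ∧ Subgroup.closure S = ⊤} :=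
    ⟨S, S.finite_toSet, (Set.ncard_coe_finset S).trans hcard, hS⟩
  refine (Nat.sInf_le hmem).antisymm (le_csInf ⟨_, hmem⟩ ?_)
  rintro _ ⟨T, hT, rfl, hclosure⟩
  rw [Set.ncard_eq_toFinset_card T hT]
  exact Group.rank_le (by rwa [hT.coe_toFinset])

theorem card_le_rank_fun (ι A : Type*) [Finite ι] [CommGroup A] [Finite A] [Nontrivial A] :
    Nat.card ι ≤ Group.rank (ι → A) := by
  have hdvd : Nat.card (ι → A) ∣ Nat.card A ^ Group.rank (ι → A) :=
    card_dvd_exponent_pow_rank' _ fun g ↦ funext fun i ↦ pow_card_eq_one' (x := g i)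
  rwa [Nat.card_fun, Nat.pow_dvd_pow_iff_le_right Finite.one_lt_card] at hdvd

theorem card_le_rank_pi_perm {ι : Type*} [Finite ι] (α : ι → Type*) [∀ i, Finite (α i)]
    [∀ i, Nontrivial (α i)] :
    Nat.card ι ≤ Group.rank (∀ i, Equiv.Perm (α i)) := by
  classical
  have (i : ι) : Fintype (α i) := Fintype.ofFinite (α i)
  have : Nontrivial ℤˣ := nontrivial_of_ne 1 (-1) (by decide)
  let signs : (∀ i, Equiv.Perm (α i)) →* (ι → ℤˣ) := MonoidHom.piMap fun _ ↦ Equiv.Perm.sign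
  have hsigns : Surjective signs := Surjective.piMap fun i ↦ Equiv.Perm.sign_surjective (α i)
  exact (card_le_rank_fun ι ℤˣ).trans (Group.rank_le_of_surjective signs hsigns)

section Perm

open Equiv Equiv.Perm

variable {α : Type*}

theorem orderOf_dvd_card_of_isCycleOn {σ : Perm α} {s : Finset α}
    (hσ : σ.IsCycleOn s) (hfix : ∀ x ∉ s, σ x = x) : orderOf σ ∣ s.card := by
  refine orderOf_dvd_of_pow_eq_one (Equiv.ext fun x ↦ ?_)
  by_cases hx : x ∈ s
  · exact hσ.pow_card_apply hx
  · exact pow_apply_eq_self_of_apply_eq_self (hfix x hx) _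

variable [DecidableEq α]

theorem eq_top_of_forall_swap_mem [Finite α] {H : Subgroup (Perm α)} (a : α)
    (h : ∀ x, swap a x ∈ H) : H = ⊤ := by
  rw [eq_top_iff, ← closure_isSwap, Subgroup.closure_le]
  rintro _ ⟨x, y, -, rfl⟩
  exact SubmonoidClass.swap_mem_trans H (swap_comm a x ▸ h x) (h y)

theorem closure_swap_isCycleOn_compl_singleton [Finite α] {σ : Perm α} {a b : α}
    (hσ : σ.IsCycleOn {a}ᶜ) (hab : a ≠ b) : Subgroup.closure {swap a b, σ} = ⊤ := by
  set H := Subgroup.closure {swap a b, σ}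
  have hτ : swap a b ∈ H := Subgroup.subset_closure (by simp)
  have hσ_mem : σ ∈ H := Subgroup.subset_closure (by simp)
  have hfix : σ a = a := by simpa using hσ.apply_mem_iff (x := a)
  refine eq_top_of_forall_swap_mem a fun x ↦ ?_
  obtain rfl | hx := eq_or_ne x a
  · exact (swap_self x).symm ▸ H.one_mem
  · obtain ⟨n, rfl⟩ := hσ.2 hab.symm hx
    have hconj : swap a ((σ ^ n) b) = σ ^ n * swap a b * (σ ^ n)⁻¹ := by
      rw [← swap_apply_apply, zpow_apply_eq_self_of_apply_eq_self hfix]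
    rw [hconj]
    exact H.mul_mem (H.mul_mem (H.zpow_mem hσ_mem n) hτ) (H.inv_mem (H.zpow_mem hσ_mem n))

theorem closure_swap_isCycleOn_univ [Finite α] [Nontrivial α] {σ : Perm α}
    (hσ : σ.IsCycleOn Set.univ) (a : α) : Subgroup.closure {swap a (σ a), σ} = ⊤ := by
  have := Fintype.ofFinite α
  have hcycle : σ.IsCycle := isCycle_iff_exists_isCycleOn.mpr
    ⟨Set.univ, Set.nontrivial_univ, hσ, fun x _ ↦ Set.mem_univ x⟩
  have hsupport : σ.support = Finset.univ := Finset.eq_univ_of_forall fun x ↦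
    mem_support.mpr (hσ.apply_ne Set.nontrivial_univ (Set.mem_univ x))
  rw [Set.pair_comm, closure_cycle_adjacent_swap hcycle hsupport]

theorem exists_orderOf_eq_two_odd_orderOf_closure_eq_top (α : Type*) [Finite α] [Nontrivial α] :
    ∃ τ σ : Perm α, orderOf τ = 2 ∧ Odd (orderOf σ) ∧ Subgroup.closure {τ, σ} = ⊤ := by
  classical
  have := Fintype.ofFinite α
  obtain ⟨a, b, hab⟩ := exists_pair_ne α
  rcases Nat.even_or_odd (Fintype.card α) with heven | hodd
  · obtain ⟨σ, hσ, hsupport⟩ := Finset.exists_cycleOn ({a}ᶜ : Finset α)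
    have hfix (x : α) (hx : x ∉ ({a}ᶜ : Finset α)) : σ x = x :=
      notMem_support.mp fun hx' ↦ hx (hsupport hx')
    have hcard : Odd ({a}ᶜ : Finset α).card := by
      rw [Finset.card_compl, Finset.card_singleton]
      exact Nat.Even.sub_odd Fintype.card_pos heven odd_one
    have hσ_odd : Odd (orderOf σ) := hcard.of_dvd_nat (orderOf_dvd_card_of_isCycleOn hσ hfix)
    exact ⟨swap a b, σ, IsSwap.orderOf ⟨a, b, hab, rfl⟩, hσ_odd,
      closure_swap_isCycleOn_compl_singleton (by simpa using hσ) hab⟩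
  · obtain ⟨σ, hσ, -⟩ := Finset.exists_cycleOn (Finset.univ : Finset α)
    have hσ_univ : σ.IsCycleOn Set.univ := by simpa using hσ
    have hne : a ≠ σ a := (hσ_univ.apply_ne Set.nontrivial_univ (Set.mem_univ a)).symm
    have hdvd : orderOf σ ∣ Fintype.card α := orderOf_dvd_card_of_isCycleOn hσ (by simp)
    exact ⟨swap a (σ a), σ, IsSwap.orderOf ⟨a, σ a, hne, rfl⟩, hodd.of_dvd_nat hdvd,
      closure_swap_isCycleOn_univ hσ_univ a⟩

theorem exists_perm_forall_apply_ne (α : Type*) [Finite α] [Nontrivial α] :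
    ∃ σ : Perm α, ∀ x, σ x ≠ x := by
  classical
  have := Fintype.ofFinite α
  obtain ⟨σ, hσ, -⟩ := Finset.exists_cycleOn (Finset.univ : Finset α)
  exact ⟨σ, fun x ↦ hσ.apply_ne (by simpa using Set.nontrivial_univ) (Finset.mem_univ x)⟩

end Perm

theorem rank_le_card_of_closure_range_eq_top {ι G : Type*} [Finite ι] [Group G] [Group.FG G]
    {g : ι → G} (hg : Subgroup.closure (Set.range g) = ⊤) : Group.rank G ≤ Nat.card ι := by
  classical
  have := Fintype.ofFinite ι
  calc Group.rank G ≤ (Finset.univ.image g).card := Group.rank_le (by simpa using hg)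
    _ ≤ Finset.univ.card := Finset.card_image_le
    _ = Nat.card ι := Nat.card_eq_fintype_card.symm

theorem mem_zpowers_mul_of_commute_of_coprime {G : Type*} [Group G] {x y : G} (hxy : Commute x y)
    (hcop : (orderOf x).Coprime (orderOf y)) : x ∈ Subgroup.zpowers (x * y) := by
  have hpow : (x * y) ^ orderOf y = x ^ orderOf y := by
    rw [hxy.mul_pow, pow_orderOf_eq_one, mul_one]
  have hx : x ∈ Subgroup.zpowers (x ^ orderOf y) := mem_zpowers_pow_iff.mpr hcop.symm
  rw [← hpow] at hx
  exact Subgroup.zpowers_le.mpr (Subgroup.npow_mem_zpowers _ _) hx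

theorem closure_range_mulSingle_mul_mulSingle {ι : Type*} [Finite ι] [DecidableEq ι]
    {G : ι → Type*} [∀ i, Group (G i)] {x y : ∀ i, G i} {ρ : Equiv.Perm ι} (hρ : ∀ i, ρ i ≠ i)
    (hcop : ∀ i, (orderOf (x i)).Coprime (orderOf (y (ρ i))))
    (hgen : ∀ i, Subgroup.closure {x i, y i} = ⊤) :
    Subgroup.closure
      (Set.range fun i ↦ Pi.mulSingle i (x i) * Pi.mulSingle (ρ i) (y (ρ i))) = ⊤ := by
  set g : ι → ∀ i, G i := fun i ↦ Pi.mulSingle i (x i) * Pi.mulSingle (ρ i) (y (ρ i))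
  set H := Subgroup.closure (Set.range g)
  have hg (i : ι) : g i ∈ H := Subgroup.subset_closure (Set.mem_range_self i)
  have hx (i : ι) : Pi.mulSingle i (x i) ∈ H := by
    refine Subgroup.zpowers_le.mpr (hg i) (mem_zpowers_mul_of_commute_of_coprime
      (Pi.mulSingle_commute (hρ i).symm (x i) (y (ρ i))) ?_)
    simpa only [orderOf_piMulSingle] using hcop i
  have hy (i : ι) : Pi.mulSingle i (y i) ∈ H := by
    obtain ⟨i, rfl⟩ := ρ.surjective i
    exact (H.mul_mem_cancel_left (hx i)).mp (hg i)
  have hfactor (i : ι) : H.comap (MonoidHom.mulSingle G i) = ⊤ := by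
    rw [eq_top_iff, ← hgen i, Subgroup.closure_le, Set.pair_subset_iff]
    exact ⟨hx i, hy i⟩
  refine (Subgroup.eq_top_iff' H).mpr fun z ↦ Subgroup.pi_mem_of_mulSingle_mem z fun i ↦ ?_
  exact (Subgroup.eq_top_iff' _).mp (hfactor i) (z i)

theorem rank_pi_perm_le_card {ι : Type*} [Finite ι] [Nontrivial ι] (α : ι → Type*)
    [∀ i, Finite (α i)] [∀ i, Nontrivial (α i)] :
    Group.rank (∀ i, Equiv.Perm (α i)) ≤ Nat.card ι := by
  classical
  choose τ σ hτ hσ hgen using fun i ↦ exists_orderOf_eq_two_odd_orderOf_closure_eq_top (α i)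
  obtain ⟨ρ, hρ⟩ := exists_perm_forall_apply_ne ι
  have hcop (i : ι) : (orderOf (τ i)).Coprime (orderOf (σ (ρ i))) := by
    rw [hτ, Nat.coprime_two_left]
    exact hσ (ρ i)
  exact rank_le_card_of_closure_range_eq_top (closure_range_mulSingle_mul_mulSingle hρ hcop hgen)

theorem rank_prod_symm_general {ι : Type*} [Finite ι] [Nontrivial ι] (α : ι → Type*)
    [∀ i, Finite (α i)] [∀ i, Nontrivial (α i)] :
    grank (∀ i, Equiv.Perm (α i)) = Nat.card ι := by
  rw [grank_eq_rank]
  exact (rank_pi_perm_le_card α).antisymm (card_le_rank_pi_perm α)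

/-- Let `u ≥ 2` and `l₁, …, l_u ≥ 2`.  Then the rank of
`Sym(l₁) × ⋯ × Sym(l_u)` equals `u`. -/
theorem rank_prod_symm (u : ℕ) (hu : 2 ≤ u) (l : Fin u → ℕ) (hl : ∀ j, 2 ≤ l j) :
    grank ((j : Fin u) → Equiv.Perm (Fin (l j))) = u := by
  have : Nontrivial (Fin u) := Fin.nontrivial_iff_two_le.mpr hu
  have (j : Fin u) : Nontrivial (Fin (l j)) := Fin.nontrivial_iff_two_le.mpr (hl j)
  rw [rank_prod_symm_general, Nat.card_fin]
end

section
/- Let f ∈ 𝒜, g ∈ T(X,P) and a ∈ Σ(X,P) be such that f = ag (i.e. (x)f = ((x)a)g for all x ∈ X). Then a ∈ S(X,P). -/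
open Function Set

/-- The monoid (as a subset of `Function.End X`) of all transformations preserving
the partition induced by the equivalence relation `r`. -/
def TSet {X : Type*} (r : Setoid X) : Set (Function.End X) :=
  {f | ∀ x y : X, r x y → r (f x) (f y)}

/-- The group of units of `TSet r` (i.e. `S(X,P)`): the permutations `g` of `X` with
`x ∼ y ↔ g x ∼ g y`. -/
def SXP {X : Type*} (r : Setoid X) : Set (Function.End X) :=
  {f | Function.Bijective f ∧ ∀ x y : X, r (f x) (f y) ↔ r x y}

/-- The submonoid (as a subset) of transformations preserving the partition whose
image meets every block of the partition. -/
def SigmaSet {X : Type*} (r : Setoid X) : Set (Function.End X) :=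
  {f | f ∈ TSet r ∧ ∀ B ∈ Setoid.classes r, (Set.range f ∩ B).Nonempty}

/-- The number of blocks of the partition having size `s`. -/
noncomputable def blockCount {X : Type*} (r : Setoid X) (s : ℕ) : ℕ :=
  {B | B ∈ Setoid.classes r ∧ B.ncard = s}.ncard

/-! Since `a` meets every block, it permutes the finitely many blocks, so points lie in a common
block exactly when their images under `a` do. Two points with the same image under `a` thus share a
block; they also have the same image under `f`, which is injective there. Hence `a` is injective,
and so bijective. -/

section BlockMap

variable {X : Type*} {r : Setoid X} {a : Function.End X}

/-- The map induced on the blocks by a transformation `a` preserving the partition (`ā` in the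
paper), with the blocks encoded as the elements of `Quotient r`. -/
def blockMap (ha : a ∈ TSet r) : Quotient r → Quotient r :=
  Quotient.map a ha

theorem blockMap_mk (ha : a ∈ TSet r) (x : X) :
    blockMap ha (Quotient.mk r x) = Quotient.mk r (a x) :=
  rfl

theorem blockMap_surjective (ha : a ∈ SigmaSet r) : Surjective (blockMap ha.1) := by
  refine Quotient.ind fun y => ?_
  obtain ⟨_, ⟨x, rfl⟩, hxy⟩ := ha.2 _ (r.mem_classes y)
  exact ⟨Quotient.mk r x, Quotient.sound hxy⟩

theorem rel_apply_iff_of_blockMap_injective (ha : a ∈ TSet r) (hinj : Injective (blockMap ha))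
    {x y : X} : r (a x) (a y) ↔ r x y := by
  simp only [← Quotient.eq, ← blockMap_mk ha, hinj.eq_iff]

theorem rel_apply_iff_of_mem_SigmaSet [Finite (Quotient r)] (ha : a ∈ SigmaSet r) {x y : X} :
    r (a x) (a y) ↔ r x y :=
  rel_apply_iff_of_blockMap_injective ha.1
    (Finite.injective_iff_surjective.mpr (blockMap_surjective ha))

theorem injective_of_mem_SigmaSet_of_injOn_classes [Finite (Quotient r)] (ha : a ∈ SigmaSet r)
    (hinj : ∀ B ∈ r.classes, InjOn a B) : Injective a := by
  intro x y hxy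
  have hr : r x y := (rel_apply_iff_of_mem_SigmaSet ha).mp (hxy ▸ r.refl (a x))
  obtain ⟨B, hB, hx, hy⟩ := r.rel_iff_exists_classes.mp hr
  exact hinj B hB hx hy hxy

theorem mem_SXP_of_mem_SigmaSet_of_injOn_classes [Finite X] (ha : a ∈ SigmaSet r)
    (hinj : ∀ B ∈ r.classes, InjOn a B) : a ∈ SXP r :=
  ⟨Finite.injective_iff_bijective.mp (injective_of_mem_SigmaSet_of_injOn_classes ha hinj),
    fun _ _ => rel_apply_iff_of_mem_SigmaSet ha⟩

end BlockMap

theorem left_factor_mem_SXP_general {X Y : Type*} [Finite X] {r : Setoid X} {a : Function.End X}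
    {f g : X → Y} (ha : a ∈ SigmaSet r) (hfinj : ∀ B ∈ r.classes, InjOn f B)
    (hfactor : ∀ x, f x = g (a x)) : a ∈ SXP r := by
  obtain rfl : f = g ∘ a := funext hfactor
  exact mem_SXP_of_mem_SigmaSet_of_injOn_classes ha fun B hB => (hfinj B hB).of_comp

/-- (Blocks are enumerated as `Pb 0, …, Pb (N-1)` with
nondecreasing sizes; `F` is the transformation of indices induced by `f`, and `f`
belongs to `𝒜`, i.e. `f` is injective on every block and `F` has image of size
`N - 1`.)  If `f = a g` (composing left to right) with `a ∈ Σ(X,P)` and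
`g ∈ T(X,P)`, then `a ∈ S(X,P)`. -/
theorem left_factor_mem_SXP {X : Type*} [Fintype X] [Nonempty X] (r : Setoid X)
    (N : ℕ) (Pb : Fin N → Set X)
    (hPmem : ∀ i, Pb i ∈ Setoid.classes r)
    (hPinj : Function.Injective Pb)
    (hPsurj : ∀ B ∈ Setoid.classes r, ∃ i, Pb i = B)
    (hPmono : Monotone fun i => (Pb i).ncard)
    (f a g : Function.End X)
    (hf : f ∈ TSet r) (ha : a ∈ SigmaSet r) (hg : g ∈ TSet r)
    (F : Fin N → Fin N) (hF : ∀ i, f '' Pb i ⊆ Pb (F i))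
    (hfinj : ∀ i, Set.InjOn f (Pb i))
    (hFim : (Set.range F).ncard = N - 1)
    (hfactor : ∀ x : X, f x = g (a x)) :
    a ∈ SXP r :=
  left_factor_mem_SXP_general ha (fun B hB => (hPsurj B hB).elim fun i hi => hi ▸ hfinj i) hfactor
end

section
/- Let f ∈ 𝒜, a ∈ T(X,P) and g ∈ T(X,P) with g ∉ Σ(X,P) be such that f = ga (i.e. (x)f = ((x)g)a for all x ∈ X). Then g ∈ 𝒜. -/
open Function Set

/-!
Sending a point to the index of its block turns the partition into the fibres of a surjection
`π : X → ι`, and the transformations preserving the partition are those descending along `π`.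
If `g` and `a` descend to `G` and `A`, then `g a` descends to `A ∘ G`, so the rank of `G` is at
least that of `A ∘ G`, which is `n - 1`; and `G` is not surjective because `g ∉ Σ(X,P)`.
-/

section

variable {X ι : Type*}

theorem exists_surjective_ker_eq_and_fibers_eq {r : Setoid X} {P : ι → Set X}
    (hP : BijOn P univ r.classes) :
    ∃ π : X → ι, Surjective π ∧ Setoid.ker π = r ∧ (fun i => π ⁻¹' {i}) = P := by
  have exists_mem_block (x : X) : ∃ i, x ∈ P i := by
    obtain ⟨i, -, hi⟩ := hP.surjOn (r.mem_classes x)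
    exact ⟨i, hi ▸ r.refl x⟩
  choose π hπ using exists_mem_block
  have index_eq_of_mem {x : X} {i : ι} (hx : x ∈ P i) : π x = i :=
    hP.injOn (mem_univ _) (mem_univ _) <|
      Setoid.eq_of_mem_classes (hP.mapsTo (mem_univ _)) (hπ x) (hP.mapsTo (mem_univ _)) hx
  refine ⟨π, fun i => ?_, Setoid.ext fun x y => ?_, funext fun i => Set.ext fun x => ?_⟩
  · obtain ⟨x, hx⟩ : (P i).Nonempty := nonempty_iff_ne_empty.2 fun h =>
      Setoid.empty_notMem_classes (h ▸ hP.mapsTo (mem_univ i))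
    exact ⟨x, index_eq_of_mem hx⟩
  · rw [Setoid.ker_def, Setoid.rel_iff_exists_classes]
    refine ⟨fun h => ⟨P (π x), hP.mapsTo (mem_univ _), hπ x, h ▸ hπ y⟩, ?_⟩
    rintro ⟨B, hB, hx, hy⟩
    obtain ⟨i, -, rfl⟩ := hP.surjOn hB
    exact (index_eq_of_mem hx).trans (index_eq_of_mem hy).symm
  · exact ⟨fun h => h ▸ hπ x, index_eq_of_mem⟩

theorem mem_TSet_ker_iff_exists_semiconj {π : X → ι} (hπ : Surjective π) {a : Function.End X} :
    a ∈ TSet (Setoid.ker π) ↔ ∃ A, Semiconj π a A :=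
  ⟨fun ha => ⟨fun i => π (a (surjInv hπ i)), fun _ => ha _ _ (surjInv_eq hπ _).symm⟩,
    fun ⟨A, hA⟩ _ _ hxy => (hA _).trans <| (congrArg A hxy).trans (hA _).symm⟩

theorem mem_SigmaSet_ker_of_semiconj {π : X → ι} (hπ : Surjective π) {g : Function.End X}
    {G : ι → ι} (hG : Semiconj π g G) (hGsurj : Surjective G) : g ∈ SigmaSet (Setoid.ker π) := by
  refine ⟨(mem_TSet_ker_iff_exists_semiconj hπ).2 ⟨G, hG⟩, ?_⟩
  rintro _ ⟨z, rfl⟩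
  obtain ⟨x, hx⟩ := hGsurj.comp hπ (π z)
  exact ⟨g x, mem_range_self x, (hG x).trans hx⟩

theorem ncard_range_add_one_eq_card_of_not_surjective {α β γ : Type*} [Finite β] {G : α → β}
    {A : β → γ} (hAG : Nat.card β ≤ (range (A ∘ G)).ncard + 1) (hG : ¬ Surjective G) :
    (range G).ncard + 1 = Nat.card β := by
  have rank_comp_le : (range (A ∘ G)).ncard ≤ (range G).ncard := by
    rw [range_comp]
    exact ncard_image_le
  have rank_lt : (range G).ncard < Nat.card β :=
    ncard_lt_card (range_eq_univ.not.2 hG)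
  lia

theorem right_divisor_mem_A_general [Finite ι] {r : Setoid X} {P : ι → Set X}
    (hP : BijOn P univ r.classes) {f g a : Function.End X}
    (hg : g ∉ SigmaSet r) (ha : a ∈ TSet r) {F G : ι → ι}
    (hF : ∀ i, MapsTo f (P i) (P (F i))) (hG : ∀ i, MapsTo g (P i) (P (G i)))
    (hfinj : ∀ i, InjOn f (P i)) (hFrank : (range F).ncard + 1 = Nat.card ι)
    (hfactor : ∀ x, f x = a (g x)) :
    (∀ i, InjOn g (P i)) ∧ (range G).ncard + 1 = Nat.card ι := by
  obtain rfl : f = a ∘ g := funext hfactor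
  refine ⟨fun i => (hfinj i).of_comp, ?_⟩
  obtain ⟨π, hπ, rfl, rfl⟩ := exists_surjective_ker_eq_and_fibers_eq hP
  have hπF : Semiconj π (a ∘ g) F := fun x => hF (π x) rfl
  have hπG : Semiconj π g G := fun x => hG (π x) rfl
  obtain ⟨A, hπA⟩ := (mem_TSet_ker_iff_exists_semiconj hπ).1 ha
  obtain rfl : F = A ∘ G :=
    hπ.injective_comp_right <| hπF.comp_eq.symm.trans (hπA.comp_right hπG).comp_eq
  exact ncard_range_add_one_eq_card_of_not_surjective hFrank.ge
    fun hGsurj => hg (mem_SigmaSet_ker_of_semiconj hπ hπG hGsurj)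

end

/-- (Blocks are enumerated as `Pb 0, …, Pb (N-1)` with
nondecreasing sizes; `F` resp. `G` are the transformations of indices induced by
`f` resp. `g`, and `f ∈ 𝒜`, i.e. `f` is injective on every block and `F` has
image of size `N - 1`.)  If `f = g a` (composing left to right) with
`g ∈ T(X,P) ∖ Σ(X,P)` and `a ∈ T(X,P)`, then `g ∈ 𝒜`. -/
theorem right_divisor_mem_A {X : Type*} [Fintype X] [Nonempty X] (r : Setoid X)
    (N : ℕ) (Pb : Fin N → Set X)
    (hPmem : ∀ i, Pb i ∈ Setoid.classes r)
    (hPinj : Function.Injective Pb)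
    (hPsurj : ∀ B ∈ Setoid.classes r, ∃ i, Pb i = B)
    (hPmono : Monotone fun i => (Pb i).ncard)
    (f g a : Function.End X)
    (hf : f ∈ TSet r) (hg : g ∈ TSet r) (hgn : g ∉ SigmaSet r) (ha : a ∈ TSet r)
    (F G : Fin N → Fin N)
    (hF : ∀ i, f '' Pb i ⊆ Pb (F i)) (hG : ∀ i, g '' Pb i ⊆ Pb (G i))
    (hfinj : ∀ i, Set.InjOn f (Pb i))
    (hFim : (Set.range F).ncard = N - 1)
    (hfactor : ∀ x : X, f x = a (g x)) :
    (∀ i, Set.InjOn g (Pb i)) ∧ (Set.range G).ncard = N - 1 := by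
  obtain ⟨i, -⟩ := hPsurj _ (r.mem_classes (Classical.arbitrary X))
  have hP : BijOn Pb univ r.classes :=
    ⟨fun i _ => hPmem i, hPinj.injOn, fun B hB => by simpa using hPsurj B hB⟩
  exact (right_divisor_mem_A_general hP hgn ha
    (fun i => mapsTo_iff_image_subset.2 (hF i)) (fun i => mapsTo_iff_image_subset.2 (hG i)) hfinj
    (by rw [hFim, Nat.card_fin, Nat.sub_add_cancel i.pos]) hfactor).imp_right
      fun hGrank => Nat.eq_sub_of_add_eq (hGrank.trans (Nat.card_fin N))
end

section
/- Let U ⊆ T(X,P) ∖ Σ(X,P) be such that Σ(X,P) ∪ U generates the monoid T(X,P). Then for all distinct i, j ∈ {1,…,n} there exist f ∈ U ∩ 𝒜 and distinct k, l ∈ {1,…,n} such that (k)f̄ = (l)f̄, |P_i| = |P_k| and |P_j| = |P_l|. -/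
open Function Set

/-!
If `|P_i| ≤ |P_j|`, then mapping `P_i` injectively into `P_j` and fixing everything else gives an
element of `T(X,P)` which is injective on blocks and whose block map identifies `i` and `j` and
nothing more. Write it as a product of generators and look at the factor applied first. If its block
map is injective, the factor is a permutation, so it carries the blocks `P_i`, `P_j` onto blocks of
the same sizes, and the remaining product merges those. Otherwise the factor itself merges `P_i` and
`P_j`; its block map is then not surjective, so the factor lies outside `Σ(X,P)`, that is, in `U`.
-/

section BlockMaps

variable {X ι : Type*} {p : X → ι} {f : X → X} {F : ι → ι}

theorem semiconj_right_unique {F' : ι → ι} (hp : Surjective p) (hF : Semiconj p f F)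
    (hF' : Semiconj p f F') : F = F' :=
  hp.injective_comp_right (hF.comp_eq.symm.trans hF'.comp_eq)

theorem mem_TSet_ker_iff {f : Function.End X} (hp : Surjective p) :
    f ∈ TSet (Setoid.ker p) ↔ ∃ F : ι → ι, Semiconj p f F := by
  constructor
  · exact fun hf => ⟨fun c => p (f (surjInv hp c)), fun x => hf _ _ (surjInv_eq hp (p x)).symm⟩
  · rintro ⟨F, hF⟩ x y hxy
    rw [Setoid.ker_def] at hxy ⊢
    rw [hF.eq, hF.eq, hxy]

theorem closure_subset_TSet {r : Setoid X} {A : Set (Function.End X)} (hA : A ⊆ TSet r) :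
    (Submonoid.closure A : Set (Function.End X)) ⊆ TSet r := fun _ hf => by
  induction hf using Submonoid.closure_induction with
  | mem _ hf => exact hA hf
  | one => exact fun _ _ hxy => hxy
  | mul _ _ _ _ hf hg => exact fun x y hxy => hf _ _ (hg x y hxy)

theorem surjective_of_mem_SigmaSet_ker {f : Function.End X} (hp : Surjective p)
    (hf : f ∈ SigmaSet (Setoid.ker p)) (hF : Semiconj p f F) : Surjective F := fun c => by
  obtain ⟨y, rfl⟩ := hp c
  obtain ⟨_, ⟨x, rfl⟩, hx⟩ := hf.2 _ (Setoid.mem_classes _ y)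
  exact ⟨p x, (hF.eq x).symm.trans hx⟩

theorem injective_of_injOn_fiber (hF : Semiconj p f F) (hf : ∀ c, InjOn f (p ⁻¹' {c}))
    (hFinj : Injective F) : Injective f := fun x y hxy => by
  have hpxy : p x = p y := hFinj (by rw [← hF.eq, ← hF.eq, hxy])
  exact hf (p y) hpxy rfl hxy

theorem image_fiber_subset (hF : Semiconj p f F) (c : ι) : f '' (p ⁻¹' {c}) ⊆ p ⁻¹' {F c} := by
  rintro _ ⟨x, rfl, rfl⟩
  exact hF.eq x

theorem image_fiber_eq (hF : Semiconj p f F) (hf : Surjective f) (hFinj : Injective F) (c : ι) :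
    f '' (p ⁻¹' {c}) = p ⁻¹' {F c} := by
  rw [← hf.image_preimage (p ⁻¹' {F c}), ← preimage_comp, hF.comp_eq, preimage_comp,
    ← image_singleton, hFinj.preimage_image]

theorem exists_blockIndex {r : Setoid X} {P : ι → Set X} (hPinj : Injective P)
    (hP : range P = r.classes) :
    ∃ p : X → ι, Surjective p ∧ Setoid.ker p = r ∧ (fun c => p ⁻¹' {c}) = P := by
  have hblock (x : X) : ∃ c, P c = {y | r y x} := hP.ge (Setoid.mem_classes r x)
  choose p hp using hblock
  have mem_iff (c : ι) (x : X) : p x = c ↔ x ∈ P c := by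
    refine ⟨fun h => h ▸ hp x ▸ r.refl' x, fun hx => hPinj ?_⟩
    exact Setoid.eq_of_mem_classes (hP ▸ mem_range_self _) (hp x ▸ r.refl' x)
      (hP ▸ mem_range_self c) hx
  refine ⟨p, fun c => ?_, Setoid.ext fun x y => ?_, funext fun c => Set.ext (mem_iff c)⟩
  · obtain ⟨x, hx⟩ : (P c).Nonempty :=
      Setoid.nonempty_of_mem_partition r.isPartition_classes (hP ▸ mem_range_self c)
    exact ⟨x, (mem_iff c x).2 hx⟩
  · rw [Setoid.ker_def, mem_iff, hp y, mem_ofPred_eq]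

end BlockMaps

section SingleCollision

variable {α β γ : Type*} {i j : α}

theorem ncard_range_of_injOn_compl_singleton [Finite α] {F : α → β} (hij : i ≠ j)
    (hFij : F i = F j) (hF : InjOn F {i}ᶜ) : (range F).ncard = Nat.card α - 1 := by
  have hrange : range F = F '' {i}ᶜ := by
    rw [← image_univ, ← compl_union_self {i}, image_union, image_singleton, union_eq_left,
      singleton_subset_iff]
    exact ⟨j, hij.symm, hFij.symm⟩
  rw [hrange, hF.ncard_image, ncard_compl, ncard_singleton]

theorem injOn_compl_singleton_of_collision {F : α → β} (hFij : F i = F j)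
    (hF : InjOn F {i}ᶜ) : InjOn F {j}ᶜ := by
  rcases eq_or_ne i j with rfl | hij
  · exact hF
  intro a ha b hb hab
  by_cases hai : a = i <;> by_cases hbi : b = i
  · rw [hai, hbi]
  · exact absurd (hF hbi hij.symm (by rw [← hab, hai, hFij])) hb
  · exact absurd (hF hai hij.symm (by rw [hab, hbi, hFij])) ha
  · exact hF hai hbi hab

theorem eq_of_comp_collision {G : β → γ} {S : α → β} (hij : i ≠ j) (hGS : G (S i) = G (S j))
    (hinj : InjOn (G ∘ S) {i}ᶜ) (hS : ¬ Injective S) : S i = S j := by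
  have collision_at_i {b : α} (hb : b ≠ i) (hib : S i = S b) : S i = S j := by
    have hbj : b = j := hinj hb hij.symm (by rw [comp_apply, comp_apply, ← hib, hGS])
    rw [hib, hbj]
  obtain ⟨a, b, hab, hne⟩ : ∃ a b, S a = S b ∧ a ≠ b := not_injective_iff.1 hS
  by_cases ha : a = i
  · exact collision_at_i (ha ▸ hne.symm) (ha ▸ hab)
  by_cases hb : b = i
  · exact collision_at_i ha (hb ▸ hab.symm)
  · exact absurd (hinj.of_comp ha hb hab) hne

end SingleCollision

/-- `f` is an element of `𝒜` merging the blocks `i` and `j`. The partition is given by the fibres of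
the block index `p`, and `F` is the block map `f̄`. Injectivity of `F` away from `i` says that `i`
and `j` are the only blocks identified. -/
structure IsBlockMerge {X ι : Type*} (p : X → ι) (f : X → X) (F : ι → ι) (i j : ι) : Prop where
  semiconj : Semiconj p f F
  injOn_fiber : ∀ c, InjOn f (p ⁻¹' {c})
  ne : i ≠ j
  map_eq : F i = F j
  injOn_compl : InjOn F {i}ᶜ

namespace IsBlockMerge

variable {X ι : Type*} {p : X → ι} {f g s : X → X} {F G S : ι → ι} {i j : ι}

theorem symm (h : IsBlockMerge p f F i j) : IsBlockMerge p f F j i where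
  semiconj := h.semiconj
  injOn_fiber := h.injOn_fiber
  ne := h.ne.symm
  map_eq := h.map_eq.symm
  injOn_compl := injOn_compl_singleton_of_collision h.map_eq h.injOn_compl

theorem exists_of_encard_le [Nonempty X] (hij : i ≠ j) (hfin : (p ⁻¹' {i}).Finite)
    (hle : (p ⁻¹' {i}).encard ≤ (p ⁻¹' {j}).encard) : ∃ f F, IsBlockMerge p f F i j := by
  classical
  obtain ⟨e, he_maps, he_inj⟩ := hfin.exists_injOn_of_encard_le hle
  refine ⟨(p ⁻¹' {i}).piecewise e id, update id i j, fun x => ?_, fun c => ?_, hij, ?_, ?_⟩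
  · by_cases hx : p x = i
    · rw [Set.piecewise_eq_of_mem (p ⁻¹' {i}) e id hx, hx, update_self]
      exact he_maps hx
    · rw [Set.piecewise_eq_of_notMem (p ⁻¹' {i}) e id hx, update_of_ne hx, id, id]
  · rcases eq_or_ne c i with rfl | hc
    · exact he_inj.congr (piecewise_eqOn _ _ _).symm
    · have hdisj : p ⁻¹' {c} ⊆ (p ⁻¹' {i})ᶜ := fun x hx hxi => hc (hx.symm.trans hxi)
      exact (injOn_id _).congr ((piecewise_eqOn_compl _ _ _).mono hdisj).symm
  · rw [update_self, update_of_ne hij.symm, id]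
  · exact (injOn_id _).congr fun a ha => (update_of_ne ha _ _).symm

theorem exists_of_ne [Finite X] (hp : Surjective p) (hij : i ≠ j) :
    ∃ f F, IsBlockMerge p f F i j := by
  have : Nonempty X := ⟨surjInv hp i⟩
  rcases le_total (p ⁻¹' {i}).encard (p ⁻¹' {j}).encard with hle | hle
  · exact exists_of_encard_le hij (toFinite _) hle
  · obtain ⟨f, F, h⟩ := exists_of_encard_le hij.symm (toFinite _) hle
    exact ⟨f, F, h.symm⟩

theorem notMem_SigmaSet [Finite ι] {f : Function.End X} (h : IsBlockMerge p f F i j)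
    (hp : Surjective p) : f ∉ SigmaSet (Setoid.ker p) := fun hf =>
  h.ne (Finite.injective_iff_surjective.2 (surjective_of_mem_SigmaSet_ker hp hf h.semiconj)
    h.map_eq)

theorem first_of_comp (h : IsBlockMerge p (g ∘ s) (G ∘ S) i j) (hs : Semiconj p s S)
    (hS : ¬ Injective S) : IsBlockMerge p s S i j where
  semiconj := hs
  injOn_fiber c := (h.injOn_fiber c).of_comp
  ne := h.ne
  map_eq := eq_of_comp_collision h.ne h.map_eq h.injOn_compl hS
  injOn_compl := h.injOn_compl.of_comp

theorem second_of_comp (h : IsBlockMerge p (g ∘ s) (G ∘ S) i j) (hg : Semiconj p g G)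
    (hs : Semiconj p s S) (hs_surj : Surjective s) (hS : Bijective S) :
    IsBlockMerge p g G (S i) (S j) where
  semiconj := hg
  injOn_fiber := hS.surjective.forall.2 fun c => by
    rw [← image_fiber_eq hs hs_surj hS.injective c]
    exact (h.injOn_fiber c).image_of_comp
  ne := hS.injective.ne h.ne
  map_eq := h.map_eq
  injOn_compl := by
    rw [← image_singleton, ← image_compl_eq hS]
    exact h.injOn_compl.image_of_comp

theorem exists_mem_of_mem_closure [Finite X] [Finite ι] {A : Set (Function.End X)}
    {f : Function.End X} (hp : Surjective p) (hA : A ⊆ TSet (Setoid.ker p))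
    (hf : f ∈ Submonoid.closure A) (h : IsBlockMerge p f F i j) :
    ∃ g ∈ A, ∃ G k l, IsBlockMerge p g G k l ∧
      (p ⁻¹' {k}).ncard = (p ⁻¹' {i}).ncard ∧ (p ⁻¹' {l}).ncard = (p ⁻¹' {j}).ncard := by
  induction hf using Submonoid.closure_induction_right generalizing F i j with
  | one =>
    obtain rfl : F = id := semiconj_right_unique hp h.semiconj fun _ => rfl
    exact absurd h.map_eq h.ne
  | mul_right g hg s hs ih =>
    obtain ⟨G, hG⟩ := (mem_TSet_ker_iff hp).1 (closure_subset_TSet hA hg)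
    obtain ⟨S, hS⟩ := (mem_TSet_ker_iff hp).1 (hA hs)
    obtain rfl : F = G ∘ S := semiconj_right_unique hp h.semiconj (hG.comp_right hS)
    by_cases hS_inj : Injective S
    · have hs_inj : Injective s :=
        injective_of_injOn_fiber hS (fun c => (h.injOn_fiber c).of_comp) hS_inj
      have hs_surj : Surjective s := Finite.surjective_of_injective hs_inj
      have ncard_fiber (c : ι) : (p ⁻¹' {S c}).ncard = (p ⁻¹' {c}).ncard := by
        rw [← image_fiber_eq hS hs_surj hS_inj, ncard_image_of_injective _ hs_inj]
      simpa only [ncard_fiber] using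
        ih (h.second_of_comp hG hS hs_surj ⟨hS_inj, Finite.surjective_of_injective hS_inj⟩)
    · exact ⟨s, hs, S, i, j, h.first_of_comp hS hS_inj, rfl, rfl⟩

end IsBlockMerge

theorem generators_contain_A_elements_general {X ι : Type*} [Finite X] (r : Setoid X)
    (P : ι → Set X) (hPinj : Injective P) (hP : range P = r.classes) (U : Set (Function.End X))
    (hgen : (Submonoid.closure (SigmaSet r ∪ U) : Set (Function.End X)) = TSet r)
    (i j : ι) (hij : i ≠ j) :
    ∃ f ∈ U, ∃ F : ι → ι,
      (∀ c, f '' P c ⊆ P (F c)) ∧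
      (∀ c, InjOn f (P c)) ∧
      (range F).ncard = Nat.card ι - 1 ∧
      ∃ k l : ι, k ≠ l ∧ F k = F l ∧
        (P k).ncard = (P i).ncard ∧ (P l).ncard = (P j).ncard := by
  obtain ⟨p, hp, rfl, rfl⟩ := exists_blockIndex hPinj hP
  have : Finite ι := Finite.of_surjective p hp
  obtain ⟨g, G, hg⟩ : ∃ g G, IsBlockMerge p g G i j := IsBlockMerge.exists_of_ne hp hij
  have hg_mem : g ∈ Submonoid.closure (SigmaSet (Setoid.ker p) ∪ U) :=
    hgen.ge ((mem_TSet_ker_iff hp).2 ⟨G, hg.semiconj⟩)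
  obtain ⟨f, hf, F, k, l, hF, hk, hl⟩ :=
    hg.exists_mem_of_mem_closure hp (hgen ▸ Submonoid.subset_closure) hg_mem
  exact ⟨f, hf.resolve_left (hF.notMem_SigmaSet hp), F, image_fiber_subset hF.semiconj,
    hF.injOn_fiber, ncard_range_of_injOn_compl_singleton hF.ne hF.map_eq hF.injOn_compl,
    k, l, hF.ne, hF.map_eq, hk, hl⟩

/-- (Blocks are enumerated as `Pb 0, …, Pb (N-1)` with
nondecreasing sizes.)  If `U ⊆ T(X,P) ∖ Σ(X,P)` is such that `Σ(X,P) ∪ U`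
generates the monoid `T(X,P)`, then for all distinct `i, j` there exist
`f ∈ U ∩ 𝒜` and distinct `k, l` such that `(k)f̄ = (l)f̄`, `|P_i| = |P_k|` and
`|P_j| = |P_l|`. -/
theorem generators_contain_A_elements {X : Type*} [Fintype X] [Nonempty X] (r : Setoid X)
    (N : ℕ) (Pb : Fin N → Set X)
    (hPmem : ∀ i, Pb i ∈ Setoid.classes r)
    (hPinj : Function.Injective Pb)
    (hPsurj : ∀ B ∈ Setoid.classes r, ∃ i, Pb i = B)
    (hPmono : Monotone fun i => (Pb i).ncard)
    (U : Set (Function.End X)) (hU : U ⊆ TSet r \ SigmaSet r)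
    (hgen : (Submonoid.closure (SigmaSet r ∪ U) : Set (Function.End X)) = TSet r) :
    ∀ i j : Fin N, i ≠ j →
      ∃ f ∈ U, ∃ F : Fin N → Fin N,
        (∀ c, f '' Pb c ⊆ Pb (F c)) ∧
        (∀ c, Set.InjOn f (Pb c)) ∧
        (Set.range F).ncard = N - 1 ∧
        ∃ k l : Fin N, k ≠ l ∧ F k = F l ∧
          (Pb k).ncard = (Pb i).ncard ∧ (Pb l).ncard = (Pb j).ncard := by
  have hP : range Pb = r.classes := (range_subset_iff.2 hPmem).antisymm hPsurj
  simpa only [Nat.card_fin] using generators_contain_A_elements_general r Pb hPinj hP U hgen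
end

section
/- Let s be the number of distinct block sizes of P and let r be the number of block sizes that occur in at least two blocks of P. Then the relative rank of T(X,P) modulo Σ(X,P) equals C(s,2) + r, where C(s,2) is the binomial coefficient s choose 2. -/
open Function Set

/-- The relative rank `rank(A : U)` of the monoid given by the subset `A` of `M`
modulo the subset `U`: the least cardinality of a set `W ⊆ A` such that `U ∪ W`
generates `A`. -/
noncomputable def relRank {M : Type*} [Monoid M] (A U : Set M) : ℕ :=
  sInf {k | ∃ W : Set M, W ⊆ A ∧ W.Finite ∧ W.ncard = k ∧
    (Submonoid.closure (U ∪ W) : Set M) = A}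

/-!
A map in `T(X,P)` that misses a block factors as a map moving fewer blocks, followed by a *move*: a
map sending one block into another and fixing every other point. So `T(X,P)` is generated by
`Σ(X,P)` and the moves. An injective move between blocks of sizes `m ≤ n` yields, modulo `Σ(X,P)`,
all moves in both directions between any two blocks of these sizes, so one generator is enough for
each unordered pair of sizes of distinct blocks. Conversely, in a factorization of such an injective
move, the first factor that is not injective on the set of blocks is faithful on each block and
merges only blocks of sizes `m` and `n`, so each pair `{m, n}` needs a generator of its own. There
are `C(s,2)` such pairs with `m ≠ n` and `r` with `m = n`.
-/

namespace PartitionTransformation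

section RelRank

variable {M : Type*} [Monoid M] {A U : Set M} {n : ℕ}

lemma relRank_eq_of_le_of_le {W : Set M} (hWA : W ⊆ A) (hW : W.Finite)
    (hgen : (Submonoid.closure (U ∪ W) : Set M) = A) (hcard : W.ncard ≤ n)
    (hmin : ∀ V ⊆ A, V.Finite → (Submonoid.closure (U ∪ V) : Set M) = A → n ≤ V.ncard) :
    relRank A U = n := by
  have hmem : W.ncard ∈ {k | ∃ V : Set M, V ⊆ A ∧ V.Finite ∧ V.ncard = k ∧
      (Submonoid.closure (U ∪ V) : Set M) = A} := ⟨W, hWA, hW, rfl, hgen⟩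
  apply le_antisymm ((Nat.sInf_le hmem).trans hcard)
  refine le_csInf ⟨_, hmem⟩ ?_
  rintro _ ⟨V, hVA, hV, rfl, hVgen⟩
  exact hmin V hVA hV hVgen

end RelRank

variable {X : Type*} {r : Setoid X} {a b a' b' : X}

/-! ### Blocks and the monoids `T(X,P)` and `Σ(X,P)` -/

/-- The block of the partition containing `a`; blocks are indexed by arbitrary representatives. -/
def block (r : Setoid X) (a : X) : Set X := {x | r x a}

/-- The number of elements of the block containing `a`. -/
noncomputable def blockSize (r : Setoid X) (a : X) : ℕ := (block r a).ncard

lemma self_mem_block (r : Setoid X) (a : X) : a ∈ block r a := r.refl a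

lemma block_eq_block_iff : block r a = block r b ↔ r a b :=
  ⟨fun h => h.subset (self_mem_block r a),
    fun h => Set.ext fun _ => ⟨fun hx => r.trans hx h, fun hx => r.trans hx (r.symm h)⟩⟩

lemma blockSize_congr (h : r a b) : blockSize r a = blockSize r b :=
  congrArg Set.ncard (block_eq_block_iff.2 h)

/-- `T(X,P)` as a submonoid of the full transformation monoid. -/
def TSubmonoid (r : Setoid X) : Submonoid (Function.End X) where
  carrier := TSet r
  one_mem' _ _ h := h
  mul_mem' hf hg x y h := hf _ _ (hg x y h)

lemma mem_SigmaSet_iff {f : X → X} :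
    f ∈ SigmaSet r ↔ f ∈ TSet r ∧ ∀ y, ∃ x, r (f x) y := by
  refine and_congr_right fun _ => ⟨fun h y => ?_, ?_⟩
  · obtain ⟨_, ⟨x, rfl⟩, hx⟩ := h _ (r.mem_classes y)
    exact ⟨x, hx⟩
  · rintro h _ ⟨y, rfl⟩
    obtain ⟨x, hx⟩ := h y
    exact ⟨f x, mem_range_self x, hx⟩

lemma rel_of_mem_SigmaSet [Finite X] {f : X → X} (hf : f ∈ SigmaSet r) {x y : X}
    (h : r (f x) (f y)) : r x y := by
  obtain ⟨hT, hmeet⟩ := mem_SigmaSet_iff.1 hf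
  let blockMap : Quotient r → Quotient r := Quotient.map f hT
  have hsurj : Surjective blockMap := fun q => by
    obtain ⟨y, rfl⟩ := Quotient.exists_rep q
    obtain ⟨x, hx⟩ := hmeet y
    exact ⟨Quotient.mk r x, Quotient.sound hx⟩
  have hinj : Injective blockMap := Finite.injective_iff_surjective.2 hsurj
  exact Quotient.exact (hinj (Quotient.sound h : blockMap (Quotient.mk r x) = Quotient.mk r (f y)))

lemma relIso_mem_SigmaSet (u : r ≃r r) : ⇑u ∈ SigmaSet r :=
  mem_SigmaSet_iff.2 ⟨fun _ _ h => u.map_rel_iff.2 h,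
    fun y => ⟨u.symm y, by rw [u.apply_symm_apply]⟩⟩

/-! ### Altering a map on one block -/

open Classical in
/-- The map `g` altered to agree with `φ` on the block of `a`. With `g = id` and `φ` sending that
block into another one, this is a move. -/
noncomputable def updateBlock (r : Setoid X) (g : X → X) (a : X) (φ : X → X) : X → X :=
  (block r a).piecewise φ g

variable {g φ i : X → X} {x : X}

open Classical in
lemma updateBlock_of_rel (h : r x a) : updateBlock r g a φ x = φ x :=
  Set.piecewise_eq_of_mem _ _ _ h

open Classical in
lemma updateBlock_of_not_rel (h : ¬ r x a) : updateBlock r g a φ x = g x :=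
  Set.piecewise_eq_of_notMem _ _ _ h

lemma updateBlock_mem_TSet (hg : g ∈ TSet r) (hφ : MapsTo φ (block r a) (block r b)) :
    updateBlock r g a φ ∈ TSet r := by
  intro x y hxy
  by_cases hx : r x a
  · have hy : r y a := r.trans (r.symm hxy) hx
    rw [updateBlock_of_rel hx, updateBlock_of_rel hy]
    exact r.trans (hφ hx) (r.symm (hφ hy))
  · have hy : ¬ r y a := fun hy => hx (r.trans hxy hy)
    rw [updateBlock_of_not_rel hx, updateBlock_of_not_rel hy]
    exact hg x y hxy

lemma id_mem_TSet : (id : X → X) ∈ TSet r := (TSubmonoid r).one_mem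

lemma updateBlock_id_mem_SigmaSet (hφ : MapsTo φ (block r a) (block r a)) :
    updateBlock r id a φ ∈ SigmaSet r := by
  refine mem_SigmaSet_iff.2 ⟨updateBlock_mem_TSet id_mem_TSet hφ, fun x => ⟨x, ?_⟩⟩
  by_cases hx : r x a
  · rw [updateBlock_of_rel hx]
    exact r.trans (hφ hx) (r.symm hx)
  · rw [updateBlock_of_not_rel hx, id]

/-- `i` embeds the block of `a` into the block of `b`; nothing is asked outside the block of `a`. -/
structure IsBlockEmbedding (r : Setoid X) (a b : X) (i : X → X) : Prop where
  mapsTo : MapsTo i (block r a) (block r b)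
  injOn : InjOn i (block r a)

lemma IsBlockEmbedding.blockSize_le [Finite X] (hi : IsBlockEmbedding r a b i) :
    blockSize r a ≤ blockSize r b :=
  Set.ncard_le_ncard_of_injOn i hi.mapsTo hi.injOn

lemma exists_isBlockEmbedding [Finite X] (h : blockSize r a ≤ blockSize r b) :
    ∃ i, IsBlockEmbedding r a b i := by
  have : Nonempty X := ⟨a⟩
  have hencard : (block r a).encard ≤ (block r b).encard := by
    rw [← (toFinite _).cast_ncard_eq, ← (toFinite _).cast_ncard_eq]
    exact_mod_cast h
  obtain ⟨i, hmaps, hinj⟩ := (toFinite _).exists_injOn_of_encard_le hencard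
  exact ⟨i, hmaps, hinj⟩

/-! ### Automorphisms of the partition -/

lemma exists_relIso_swap [Finite X] (h : blockSize r a = blockSize r b) :
    ∃ u : r ≃r r, r (u a) b ∧ ∀ x, ¬ r x a → ¬ r x b → u x = x := by
  by_cases hab : r a b
  · exact ⟨RelIso.refl r, hab, fun _ _ _ => rfl⟩
  have : Nonempty X := ⟨a⟩
  have hencard : (block r a).encard = (block r b).encard := by
    rw [← (toFinite _).cast_ncard_eq, ← (toFinite _).cast_ncard_eq]
    exact congrArg _ h
  obtain ⟨e, he⟩ := (toFinite _).exists_bijOn_of_encard_eq hencard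
  set e' := invFunOn e (block r a)
  have hinv : InvOn e' e (block r a) (block r b) := he.invOn_invFunOn
  have he' : MapsTo e' (block r b) (block r a) := (he.symm hinv.symm).mapsTo
  have hba {x : X} (hx : r x b) : ¬ r x a := fun hxa => hab (r.trans (r.symm hxa) hx)
  let swap := updateBlock r (updateBlock r id b e') a e
  have swap_of_a {x : X} (hx : r x a) : swap x = e x := updateBlock_of_rel hx
  have swap_of_b {x : X} (hx : r x b) : swap x = e' x :=
    (updateBlock_of_not_rel (hba hx)).trans (updateBlock_of_rel hx)
  have swap_of_not {x : X} (hxa : ¬ r x a) (hxb : ¬ r x b) : swap x = x :=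
    (updateBlock_of_not_rel hxa).trans (updateBlock_of_not_rel hxb)
  have hswap : Involutive swap := fun x => by
    by_cases hxa : r x a
    · rw [swap_of_a hxa, swap_of_b (he.mapsTo hxa), hinv.1 hxa]
    by_cases hxb : r x b
    · rw [swap_of_b hxb, swap_of_a (he' hxb), hinv.2 hxb]
    rw [swap_of_not hxa hxb, swap_of_not hxa hxb]
  have hT : swap ∈ TSet r := updateBlock_mem_TSet (updateBlock_mem_TSet id_mem_TSet he') he.mapsTo
  refine ⟨⟨hswap.toPerm, fun {x y} => ⟨fun hxy => ?_, hT x y⟩⟩, ?_, fun x => swap_of_not⟩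
  · have := hT _ _ hxy
    rwa [hswap.coe_toPerm, hswap x, hswap y] at this
  · exact (congrArg (r · b) (swap_of_a (r.refl a))).mpr (he.mapsTo (self_mem_block r a))

lemma blockSize_relIso (u : r ≃r r) (x : X) : blockSize r (u x) = blockSize r x := by
  have himage : u '' block r x = block r (u x) := by
    ext y
    obtain ⟨x', rfl⟩ := u.surjective y
    exact (u.injective.mem_set_image).trans u.map_rel_iff.symm
  rw [blockSize, ← himage, ncard_image_of_injective _ u.injective, blockSize]

lemma exists_relIso_map_pair [Finite X] (hab : ¬ r a b) (hab' : ¬ r a' b')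
    (ha : blockSize r a = blockSize r a') (hb : blockSize r b = blockSize r b') :
    ∃ u : r ≃r r, r (u a) a' ∧ r (u b) b' := by
  obtain ⟨u, hua, -⟩ := exists_relIso_swap ha
  obtain ⟨v, hvb, hv⟩ := exists_relIso_swap ((blockSize_relIso u b).trans hb)
  have ha'b : ¬ r a' (u b) := fun h => hab (u.map_rel_iff.1 (r.trans hua h))
  refine ⟨u.trans v, ?_, hvb⟩
  have := v.map_rel_iff.2 hua
  rwa [hv a' ha'b hab'] at this

lemma exists_comp_eqOn_of_isBlockEmbedding [Finite X] (hi : IsBlockEmbedding r a b i)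
    (hφ : MapsTo φ (block r a) (block r b)) :
    ∃ v : r ≃r r, (∀ x, r (v x) x) ∧
      ∃ α, MapsTo α (block r a) (block r a) ∧ EqOn (v ∘ i ∘ α) φ (block r a) := by
  classical
  have : Nonempty X := ⟨a⟩
  let sec := invFunOn φ (block r a)
  have sec_mem (y : φ '' block r a) : sec y ∈ block r a := invFunOn_mem y.2
  have φ_sec (y : φ '' block r a) : φ (sec y) = y := invFunOn_eq y.2
  have isec_injective :
      Injective fun y : φ '' block r a => (⟨i (sec y), hi.mapsTo (sec_mem y)⟩ : block r b) := by
    intro y z hyz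
    have hsec := hi.injOn (sec_mem y) (sec_mem z) (congrArg Subtype.val hyz)
    exact Subtype.ext ((φ_sec y).symm.trans ((congrArg φ hsec).trans (φ_sec z)))
  obtain ⟨σ, hσ⟩ := Equiv.Perm.exists_extending_pair _ _ isec_injective
    (inclusion_injective hφ.image_subset)
  let v : Equiv.Perm X := Equiv.Perm.ofSubtype σ
  have hv (x : X) : r (v x) x := by
    by_cases hx : x ∈ block r b
    · rw [Equiv.Perm.ofSubtype_apply_of_mem σ hx]
      exact r.trans (σ ⟨x, hx⟩).2 (r.symm hx)
    · rw [Equiv.Perm.ofSubtype_apply_of_not_mem σ hx]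
  refine ⟨⟨v, fun {x y} => ⟨fun h => r.trans (r.symm (hv x)) (r.trans h (hv y)),
    fun h => r.trans (hv x) (r.trans h (r.symm (hv y)))⟩⟩, hv, sec ∘ φ,
    fun x hx => sec_mem ⟨φ x, mem_image_of_mem φ hx⟩, fun x hx => ?_⟩
  let y : φ '' block r a := ⟨φ x, mem_image_of_mem φ hx⟩
  exact (Equiv.Perm.ofSubtype_apply_of_mem σ (hi.mapsTo (sec_mem y))).trans
    (congrArg Subtype.val (hσ y))

lemma exists_relIso_comp_eqOn [Finite X] (hab : ¬ r a b) (hab' : ¬ r a' b')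
    (ha : blockSize r a = blockSize r a') (hb : blockSize r b = blockSize r b')
    (hi : IsBlockEmbedding r a b i) (hφ : MapsTo φ (block r a') (block r b')) :
    ∃ u : r ≃r r, r (u a) a' ∧
      ∃ α, MapsTo α (block r a') (block r a) ∧ EqOn (u ∘ i ∘ α) φ (block r a') := by
  obtain ⟨u, hua, hub⟩ := exists_relIso_map_pair hab hab' ha hb
  have hu_symm : MapsTo u.symm (block r a') (block r a) := fun x hx =>
    u.map_rel_iff.1 (by rw [u.apply_symm_apply]; exact r.trans hx (r.symm hua))
  have hconj : IsBlockEmbedding r a' b' (u ∘ i ∘ u.symm) :=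
    ⟨fun x hx => r.trans (u.map_rel_iff.2 (hi.mapsTo (hu_symm hx))) hub,
      u.injective.injOn.comp (hi.injOn.comp u.symm.injective.injOn hu_symm) (mapsTo_univ _ _)⟩
  obtain ⟨v, hv, α, hα, hvα⟩ := exists_comp_eqOn_of_isBlockEmbedding hconj hφ
  exact ⟨u.trans v, r.trans (hv _) hua, u.symm ∘ α, hu_symm.comp hα, hvα⟩

/-! ### Generation by moves -/

variable {S : Submonoid (Function.End X)}

lemma TSet_subset_of_updateBlock_mem [Finite X] (hS : SigmaSet r ⊆ S)
    (hmove : ∀ a b φ, ¬ r a b → MapsTo φ (block r a) (block r b) → updateBlock r id a φ ∈ S) :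
    TSet r ⊆ S := by
  intro (f : X → X) hf
  induction hs : {x | ¬ r (f x) x} using WellFoundedLT.induction generalizing f with
  | _ s ih =>
  subst hs
  by_cases hmeet : ∀ y, ∃ x, r (f x) y
  · exact hS (mem_SigmaSet_iff.2 ⟨hf, hmeet⟩)
  push Not at hmeet
  obtain ⟨a, ha⟩ := hmeet
  let f' := updateBlock r f a id
  have f'_of_rel {x : X} (hx : r x a) : f' x = x := updateBlock_of_rel hx
  have f'_of_not_rel {x : X} (hx : ¬ r x a) : f' x = f x := updateBlock_of_not_rel hx
  have hfactor : f = updateBlock r id a f ∘ f' := by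
    funext x
    rw [comp_apply]
    by_cases hx : r x a
    · rw [f'_of_rel hx, updateBlock_of_rel hx]
    · rw [f'_of_not_rel hx, updateBlock_of_not_rel (ha x), id]
  have hfewer : {x | ¬ r (f' x) x} < {x | ¬ r (f x) x} := by
    refine ssubset_of_subset_of_ne (fun x hx => ?_) fun heq => ?_
    · have hxa : ¬ r x a := fun hxa => hx (by rw [f'_of_rel hxa])
      rwa [mem_ofPred_eq, f'_of_not_rel hxa] at hx
    · have : a ∈ {x | ¬ r (f' x) x} := heq ▸ ha a
      exact this (by rw [f'_of_rel (r.refl a)])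
  rw [hfactor]
  exact S.mul_mem (hmove a (f a) f (fun h => ha a (r.symm h)) fun x hx => hf x a hx)
    (ih _ hfewer (updateBlock_mem_TSet hf (mapsTo_id _)) rfl)

lemma updateBlock_mem_of_isBlockEmbedding [Finite X] (hS : SigmaSet r ⊆ S) (hab : ¬ r a b)
    (hab' : ¬ r a' b') (ha : blockSize r a = blockSize r a') (hb : blockSize r b = blockSize r b')
    (hi : IsBlockEmbedding r a b i) (hiS : updateBlock r id a i ∈ S)
    (hφ : MapsTo φ (block r a') (block r b')) : updateBlock r id a' φ ∈ S := by
  obtain ⟨u, hua, α, hα, hφα⟩ := exists_relIso_comp_eqOn hab hab' ha hb hi hφ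
  have huα : MapsTo (u ∘ α) (block r a') (block r a') := fun x hx =>
    r.trans (u.map_rel_iff.2 (hα hx)) hua
  have hfactor : updateBlock r id a' φ =
      u ∘ updateBlock r id a i ∘ u.symm ∘ updateBlock r id a' (u ∘ α) := by
    funext x
    simp only [comp_apply]
    by_cases hx : r x a'
    · rw [updateBlock_of_rel hx, updateBlock_of_rel hx, comp_apply, u.symm_apply_apply,
        updateBlock_of_rel (hα hx), ← hφα hx, comp_apply, comp_apply]
    · have hux : ¬ r (u.symm x) a := fun h => hx <| by
        rw [← u.apply_symm_apply x]
        exact r.trans (u.map_rel_iff.2 h) hua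
      rw [updateBlock_of_not_rel hx, updateBlock_of_not_rel hx, id, updateBlock_of_not_rel hux, id,
        u.apply_symm_apply]
  rw [hfactor]
  exact S.mul_mem (hS (relIso_mem_SigmaSet u)) <| S.mul_mem hiS <|
    S.mul_mem (hS (relIso_mem_SigmaSet u.symm)) (hS (updateBlock_id_mem_SigmaSet huα))

lemma IsBlockEmbedding.exists_leftInvOn (hi : IsBlockEmbedding r a b i) :
    ∃ κ, (∀ y, r (κ y) a) ∧ LeftInvOn κ i (block r a) := by
  have : Nonempty (block r a) := ⟨⟨a, self_mem_block r a⟩⟩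
  let κ := invFun ((block r a).domRestrict i)
  exact ⟨fun y => κ y, fun y => (κ y).2,
    fun x hx => congrArg Subtype.val (leftInverse_invFun hi.injOn.injective ⟨x, hx⟩)⟩

lemma updateBlock_mem_of_isBlockEmbedding_reverse (hS : SigmaSet r ⊆ S) (hab : ¬ r a b)
    (hi : IsBlockEmbedding r a b i) (hiS : updateBlock r id a i ∈ S)
    (hφ : MapsTo φ (block r b) (block r a)) : updateBlock r id b φ ∈ S := by
  obtain ⟨κ, hκa, hκ⟩ := hi.exists_leftInvOn
  have hba {x : X} (hx : r x b) : ¬ r x a := fun hxa => hab (r.trans (r.symm hxa) hx)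
  -- Exchanges the blocks of `a` and `b`, undoing `i` on the latter.
  let τ := updateBlock r (updateBlock r id a fun _ => b) b κ
  have τ_of_b {x : X} (hx : r x b) : τ x = κ x := updateBlock_of_rel hx
  have τ_of_a {x : X} (hx : r x a) : τ x = b :=
    (updateBlock_of_not_rel fun hxb => hba hxb hx).trans (updateBlock_of_rel hx)
  have τ_of_not {x : X} (hxa : ¬ r x a) (hxb : ¬ r x b) : τ x = x :=
    (updateBlock_of_not_rel hxb).trans (updateBlock_of_not_rel hxa)
  have hτ : τ ∈ SigmaSet r := by
    have ha : updateBlock r id a (fun _ => b) ∈ TSet r :=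
      updateBlock_mem_TSet id_mem_TSet fun _ _ => self_mem_block r b
    refine mem_SigmaSet_iff.2 ⟨updateBlock_mem_TSet ha fun y _ => hκa y, fun y => ?_⟩
    by_cases hya : r y a
    · exact ⟨b, τ_of_b (r.refl b) ▸ r.trans (hκa b) (r.symm hya)⟩
    by_cases hyb : r y b
    · exact ⟨a, τ_of_a (r.refl a) ▸ r.symm hyb⟩
    exact ⟨y, by rw [τ_of_not hya hyb]⟩
  have hfactor : updateBlock r id b φ =
      τ ∘ updateBlock r id a i ∘ updateBlock r id b (i ∘ φ) := by
    funext x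
    simp only [comp_apply]
    by_cases hxb : r x b
    · have hiφ : r (i (φ x)) b := hi.mapsTo (hφ hxb)
      rw [updateBlock_of_rel hxb, updateBlock_of_rel hxb, comp_apply,
        updateBlock_of_not_rel (hba hiφ), id, τ_of_b hiφ, hκ (hφ hxb)]
    rw [updateBlock_of_not_rel hxb, updateBlock_of_not_rel hxb, id]
    by_cases hxa : r x a
    · rw [updateBlock_of_rel hxa, τ_of_b (hi.mapsTo hxa), hκ hxa]
    · rw [updateBlock_of_not_rel hxa, id, τ_of_not hxa hxb]
  rw [hfactor]
  exact S.mul_mem (hS hτ) <| S.mul_mem hiS <|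
    hS (updateBlock_id_mem_SigmaSet (hi.mapsTo.comp hφ))

/-! ### Pairs of block sizes -/

/-- The unordered pairs of sizes of two distinct blocks. -/
def sizePairs (r : Setoid X) : Set (Sym2 ℕ) :=
  (fun p : X × X => s(blockSize r p.1, blockSize r p.2)) '' {p | ¬ r p.1 p.2}

/-- `f` is an injective move between two distinct blocks whose sizes form the pair `j`. -/
def IsInjectiveMove (r : Setoid X) (j : Sym2 ℕ) (f : X → X) : Prop :=
  ∃ a b i, ¬ r a b ∧ IsBlockEmbedding r a b i ∧ s(blockSize r a, blockSize r b) = j ∧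
    f = updateBlock r id a i

lemma sizePairs_finite [Finite X] : (sizePairs r).Finite :=
  (toFinite _).image _

variable {j : Sym2 ℕ} {f h : X → X}

lemma exists_isInjectiveMove [Finite X] (hj : j ∈ sizePairs r) : ∃ f, IsInjectiveMove r j f := by
  obtain ⟨⟨a, b⟩, hab, rfl⟩ := hj
  rcases le_total (blockSize r a) (blockSize r b) with hle | hle
  · obtain ⟨i, hi⟩ := exists_isBlockEmbedding hle
    exact ⟨_, a, b, i, hab, hi, rfl, rfl⟩
  · obtain ⟨i, hi⟩ := exists_isBlockEmbedding hle
    exact ⟨_, b, a, i, fun hba => hab (r.symm hba), hi, Sym2.eq_swap, rfl⟩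

lemma IsInjectiveMove.mem_TSet (hf : IsInjectiveMove r j f) : f ∈ TSet r := by
  obtain ⟨a, b, i, -, hi, -, rfl⟩ := hf
  exact updateBlock_mem_TSet id_mem_TSet hi.mapsTo

lemma IsInjectiveMove.updateBlock_mem [Finite X] (hS : SigmaSet r ⊆ S)
    (hf : IsInjectiveMove r s(blockSize r a, blockSize r b) f) (hfS : f ∈ S) (hab : ¬ r a b)
    (hle : blockSize r a ≤ blockSize r b) (hφ : MapsTo φ (block r a) (block r b)) :
    updateBlock r id a φ ∈ S := by
  obtain ⟨a₀, b₀, i, hab₀, hi, hsizes, rfl⟩ := hf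
  have hle₀ := hi.blockSize_le
  have hpair : blockSize r a₀ = blockSize r a ∧ blockSize r b₀ = blockSize r b := by
    rcases Sym2.eq_iff.1 hsizes with hsame | hcross
    · exact hsame
    · omega
  exact updateBlock_mem_of_isBlockEmbedding hS hab₀ hab hpair.1 hpair.2 hi hfS hφ

lemma TSet_subset_of_isInjectiveMove [Finite X] (hS : SigmaSet r ⊆ S)
    (hmove : ∀ j ∈ sizePairs r, ∃ f ∈ S, IsInjectiveMove r j f) : TSet r ⊆ S := by
  have upward {a b : X} {φ : X → X} (hab : ¬ r a b) (hle : blockSize r a ≤ blockSize r b)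
      (hφ : MapsTo φ (block r a) (block r b)) : updateBlock r id a φ ∈ S := by
    obtain ⟨f, hfS, hf⟩ := hmove _ ⟨(a, b), hab, rfl⟩
    exact hf.updateBlock_mem hS hfS hab hle hφ
  refine TSet_subset_of_updateBlock_mem hS fun a b φ hab hφ => ?_
  rcases le_total (blockSize r a) (blockSize r b) with hle | hle
  · exact upward hab hle hφ
  · have hba : ¬ r b a := fun hba => hab (r.symm hba)
    obtain ⟨i, hi⟩ := exists_isBlockEmbedding hle
    exact updateBlock_mem_of_isBlockEmbedding_reverse hS hba hi (upward hba hle hi.mapsTo) hφ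

lemma closure_eq_TSet [Finite X] {W : Set (Function.End X)} (hW : W ⊆ TSet r)
    (hmove : ∀ j ∈ sizePairs r, ∃ f ∈ W, IsInjectiveMove r j f) :
    (Submonoid.closure (SigmaSet r ∪ W) : Set (Function.End X)) = TSet r := by
  obtain ⟨hSigma, hWS⟩ := union_subset_iff.1 (Submonoid.subset_closure (s := SigmaSet r ∪ W))
  refine Subset.antisymm ?_ (TSet_subset_of_isInjectiveMove hSigma fun j hj => ?_)
  · exact (Submonoid.closure_le (S := TSubmonoid r)).2 (union_subset (fun _ hf => hf.1) hW)
  · obtain ⟨f, hf, hfj⟩ := hmove j hj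
    exact ⟨f, hWS hf, hfj⟩

/-! ### The lower bound -/

/-- `f` is injective on each block, merges some two blocks, and merges two distinct blocks only if
their sizes form the pair `j`. -/
structure MergesOnly (r : Setoid X) (j : Sym2 ℕ) (f : X → X) : Prop where
  injOn : ∀ x y, r x y → f x = f y → x = y
  exists_merge : ∃ x y, ¬ r x y ∧ r (f x) (f y)
  sizes_eq : ∀ x y, ¬ r x y → r (f x) (f y) → s(blockSize r x, blockSize r y) = j

lemma MergesOnly.unique {j' : Sym2 ℕ} (hj : MergesOnly r j f) (hj' : MergesOnly r j' f) :
    j = j' := by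
  obtain ⟨x, y, hxy, hfxy⟩ := hj.exists_merge
  rw [← hj.sizes_eq x y hxy hfxy, hj'.sizes_eq x y hxy hfxy]

lemma IsInjectiveMove.mergesOnly (hf : IsInjectiveMove r j f) : MergesOnly r j f := by
  obtain ⟨a, b, i, hab, hi, rfl, rfl⟩ := hf
  refine ⟨fun x y hxy hfxy => ?_, ⟨a, b, hab, ?_⟩, fun x y hxy hfxy => ?_⟩
  · by_cases hx : r x a
    · have hy : r y a := r.trans (r.symm hxy) hx
      rw [updateBlock_of_rel hx, updateBlock_of_rel hy] at hfxy
      exact hi.injOn hx hy hfxy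
    · have hy : ¬ r y a := fun hy => hx (r.trans hxy hy)
      rwa [updateBlock_of_not_rel hx, updateBlock_of_not_rel hy] at hfxy
  · rw [updateBlock_of_rel (r.refl a), updateBlock_of_not_rel fun hba => hab (r.symm hba)]
    exact hi.mapsTo (self_mem_block r a)
  · have sizes {x y : X} (hx : r x a) (hfxy : r (i x) y) :
        s(blockSize r x, blockSize r y) = s(blockSize r a, blockSize r b) := by
      rw [blockSize_congr hx, blockSize_congr (r.trans (r.symm hfxy) (hi.mapsTo hx))]
    by_cases hx : r x a <;> by_cases hy : r y a
    · exact absurd (r.trans hx (r.symm hy)) hxy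
    · rw [updateBlock_of_rel hx, updateBlock_of_not_rel hy] at hfxy
      exact sizes hx hfxy
    · rw [updateBlock_of_not_rel hx, updateBlock_of_rel hy] at hfxy
      exact Sym2.eq_swap.trans (sizes hy (r.symm hfxy))
    · rw [updateBlock_of_not_rel hx, updateBlock_of_not_rel hy] at hfxy
      exact absurd hfxy hxy

lemma MergesOnly.right_of_mul {g : X → X} (hhg : MergesOnly r j (h ∘ g))
    (hh : h ∈ TSet r) (hg : ∃ x y, ¬ r x y ∧ r (g x) (g y)) : MergesOnly r j g :=
  ⟨fun x y hxy hgxy => hhg.injOn x y hxy (congrArg h hgxy), hg,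
    fun x y hxy hgxy => hhg.sizes_eq x y hxy (hh _ _ hgxy)⟩

lemma MergesOnly.left_of_mul_relIso {u : r ≃r r} (hhu : MergesOnly r j (h ∘ u)) :
    MergesOnly r j h := by
  refine ⟨fun x y hxy hhxy => ?_, ?_, fun x y hxy hhxy => ?_⟩
  · obtain ⟨x, rfl⟩ := u.surjective x
    obtain ⟨y, rfl⟩ := u.surjective y
    exact congrArg u (hhu.injOn x y (u.map_rel_iff.1 hxy) hhxy)
  · obtain ⟨x, y, hxy, hhxy⟩ := hhu.exists_merge
    exact ⟨u x, u y, fun h => hxy (u.map_rel_iff.1 h), hhxy⟩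
  · obtain ⟨x, rfl⟩ := u.surjective x
    obtain ⟨y, rfl⟩ := u.surjective y
    rw [blockSize_relIso, blockSize_relIso]
    exact hhu.sizes_eq x y (fun h => hxy (u.map_rel_iff.2 h)) hhxy

lemma MergesOnly.left_of_mul [Finite X] {g : X → X} (hhg : MergesOnly r j (h ∘ g))
    (hg : g ∈ TSet r) (hg_rel : ∀ x y, r (g x) (g y) → r x y) : MergesOnly r j h := by
  have hinj : Injective g := fun x y hxy =>
    hhg.injOn x y (hg_rel x y (by rw [hxy])) (congrArg h hxy)
  let u : r ≃r r := ⟨Equiv.ofBijective g (Finite.injective_iff_bijective.1 hinj),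
    fun {x y} => ⟨hg_rel x y, hg x y⟩⟩
  exact MergesOnly.left_of_mul_relIso (u := u) hhg

lemma exists_mergesOnly_of_mem_closure [Finite X] {W : Set (Function.End X)} (hW : W ⊆ TSet r)
    (hf : f ∈ Submonoid.closure (SigmaSet r ∪ W)) (hfj : MergesOnly r j f) :
    ∃ w ∈ W, MergesOnly r j w := by
  have hT : SigmaSet r ∪ W ⊆ TSubmonoid r := union_subset (fun _ hg => hg.1) hW
  induction hf using Submonoid.closure_induction_right with
  | one =>
    obtain ⟨x, y, hxy, hxy'⟩ := hfj.exists_merge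
    exact absurd hxy' hxy
  | mul_right h hh g hg ih =>
    by_cases hg_rel : ∀ x y, r (g x) (g y) → r x y
    · exact ih (hfj.left_of_mul (hT hg) hg_rel)
    push Not at hg_rel
    obtain ⟨x, y, hgxy, hxy⟩ := hg_rel
    rcases hg with hg | hg
    · exact absurd (rel_of_mem_SigmaSet hg hgxy) hxy
    · exact ⟨g, hg, hfj.right_of_mul (Submonoid.closure_le.2 hT hh) ⟨x, y, hxy, hgxy⟩⟩

lemma ncard_sizePairs_le [Finite X] {W : Set (Function.End X)} (hW : W ⊆ TSet r) (hWfin : W.Finite)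
    (hgen : (Submonoid.closure (SigmaSet r ∪ W) : Set (Function.End X)) = TSet r) :
    (sizePairs r).ncard ≤ W.ncard := by
  have hexists : ∀ j ∈ sizePairs r, ∃ w ∈ W, MergesOnly r j w := fun j hj => by
    obtain ⟨f, hf⟩ := exists_isInjectiveMove hj
    exact exists_mergesOnly_of_mem_closure hW (hgen.ge hf.mem_TSet) hf.mergesOnly
  choose! w hwW hw using hexists
  exact ncard_le_ncard_of_injOn w hwW
    (fun j hj j' hj' hjj' => (hw j hj).unique (hjj' ▸ hw j' hj')) hWfin

theorem relRank_TSet_SigmaSet [Finite X] (r : Setoid X) :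
    relRank (TSet r) (SigmaSet r) = (sizePairs r).ncard := by
  have : Finite (Function.End X) := inferInstanceAs (Finite (X → X))
  have : Nonempty (X → X) := ⟨id⟩
  choose! move hmove using fun j => exists_isInjectiveMove (r := r) (j := j)
  have hW : move '' sizePairs r ⊆ TSet r := image_subset_iff.2 fun j hj => (hmove j hj).mem_TSet
  exact relRank_eq_of_le_of_le hW (toFinite _)
    (closure_eq_TSet hW fun j hj => ⟨move j, mem_image_of_mem move hj, hmove j hj⟩)
    (ncard_image_le sizePairs_finite) fun _ => ncard_sizePairs_le

/-! ### Counting the pairs of sizes -/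

lemma ncard_image_sym2Mk_offDiag {α : Type*} {t : Set α} (ht : t.Finite) :
    (uncurry Sym2.mk '' t.offDiag).ncard = t.ncard.choose 2 := by
  classical
  lift t to Finset α using ht
  rw [← Finset.coe_offDiag, ← Finset.coe_image, ncard_coe_finset, ncard_coe_finset,
    Sym2.card_image_offDiag]

lemma sizePairs_eq (r : Setoid X) :
    sizePairs r = uncurry Sym2.mk '' (range (blockSize r)).offDiag ∪
      Sym2.diag '' {s | ∃ a b, ¬ r a b ∧ blockSize r a = s ∧ blockSize r b = s} := by
  ext j
  constructor
  · rintro ⟨⟨a, b⟩, hab, rfl⟩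
    by_cases hsize : blockSize r a = blockSize r b
    · exact Or.inr ⟨_, ⟨a, b, hab, hsize, rfl⟩, by simp only [hsize, Sym2.diag]⟩
    · exact Or.inl ⟨(blockSize r a, blockSize r b),
        ⟨mem_range_self a, mem_range_self b, hsize⟩, rfl⟩
  · rintro (⟨⟨_, _⟩, ⟨⟨a, rfl⟩, ⟨b, rfl⟩, hne⟩, rfl⟩ | ⟨s, ⟨a, b, hab, rfl, hb⟩, rfl⟩)
    · exact ⟨(a, b), fun hab => hne (blockSize_congr hab), rfl⟩
    · exact ⟨(a, b), hab, by simp only [hb, Sym2.diag]⟩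

lemma ncard_sizePairs [Finite X] (r : Setoid X) :
    (sizePairs r).ncard = (range (blockSize r)).ncard.choose 2 +
      {s | ∃ a b, ¬ r a b ∧ blockSize r a = s ∧ blockSize r b = s}.ncard := by
  set repeated := {s | ∃ a b, ¬ r a b ∧ blockSize r a = s ∧ blockSize r b = s}
  have hrange : (range (blockSize r)).Finite := finite_range _
  have hrepeated : repeated.Finite := hrange.subset fun s ⟨a, _, _, ha, _⟩ => ⟨a, ha⟩
  have hdisj : Disjoint (uncurry Sym2.mk '' (range (blockSize r)).offDiag)
      (Sym2.diag '' repeated) := by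
    rw [Set.disjoint_left]
    rintro _ ⟨⟨m, n⟩, ⟨-, -, hmn⟩, rfl⟩ ⟨s, -, hs⟩
    exact hmn (Sym2.mk_isDiag_iff.1 (hs.subst (Sym2.diag_isDiag s)))
  rw [sizePairs_eq, ncard_union_eq hdisj (hrange.offDiag.image _) (hrepeated.image _),
    ncard_image_sym2Mk_offDiag hrange, ncard_image_of_injective _ Sym2.diag_injective]

lemma setOf_blockCount_ne_zero [Finite X] (r : Setoid X) :
    {s | blockCount r s ≠ 0} = range (blockSize r) := by
  ext s
  rw [mem_ofPred_eq, ← Nat.pos_iff_ne_zero, blockCount, ncard_pos]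
  constructor
  · rintro ⟨_, ⟨a, rfl⟩, ha⟩
    exact ⟨a, ha⟩
  · rintro ⟨a, ha⟩
    exact ⟨block r a, r.mem_classes a, ha⟩

lemma setOf_two_le_blockCount [Finite X] (r : Setoid X) :
    {s | 2 ≤ blockCount r s} =
      {s | ∃ a b, ¬ r a b ∧ blockSize r a = s ∧ blockSize r b = s} := by
  ext s
  rw [mem_ofPred_eq, blockCount, ← Nat.lt_iff_add_one_le, one_lt_ncard]
  constructor
  · rintro ⟨_, ⟨⟨a, rfl⟩, ha⟩, _, ⟨⟨b, rfl⟩, hb⟩, hne⟩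
    exact ⟨a, b, fun hab => hne (block_eq_block_iff.2 hab), ha, hb⟩
  · rintro ⟨a, b, hab, ha, hb⟩
    exact ⟨block r a, ⟨r.mem_classes a, ha⟩, block r b, ⟨r.mem_classes b, hb⟩,
      fun heq => hab (block_eq_block_iff.1 heq)⟩

end PartitionTransformation

/-- If `s` is the number of distinct block sizes of the
partition and `r'` is the number of block sizes occurring in at least two
blocks, then the relative rank of `T(X,P)` modulo `Σ(X,P)` is `C(s,2) + r'`. -/
theorem relRank_TXP_SigmaXP {X : Type*} [Fintype X] [Nonempty X] (r : Setoid X) :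
    relRank (TSet r) (SigmaSet r) =
      {s : ℕ | blockCount r s ≠ 0}.ncard.choose 2 +
        {s : ℕ | 2 ≤ blockCount r s}.ncard := by
  open PartitionTransformation in
  rw [relRank_TSet_SigmaSet, ncard_sizePairs, setOf_blockCount_ne_zero, setOf_two_le_blockCount]
end

section
/- The relative rank of T(X,P) modulo Σ(X,P) equals C(p+q,2) + p + h(p,q,t), where C(p+q,2) is the binomial coefficient (p+q) choose 2. -/
open Function Set

/-- `h(p,q,0) = 0`, `h(p,q,1) = p + q`, and `h(p,q,t) = p + q + 1` for `t ≥ 2`. -/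
def hh (p q t : ℕ) : ℕ := if t = 0 then 0 else if t = 1 then p + q else p + q + 1

/-!
A map in `T(X,P)` whose image misses a block is a map in `T(X,P)` followed by one that collapses a
single block into another block and fixes the rest; so `Σ(X,P)` and these collapses generate
`T(X,P)`. Up to factors from `Σ(X,P)`, a collapse depends only on the unordered pair of sizes of the
two blocks, and one collapse that is injective on the smaller block serves for each pair.
Conversely, in any factorization of a map that is injective on every block and merges exactly two
blocks, the first factor that is not a unit also merges exactly two blocks, of the same sizes; such
a factor lies outside `Σ(X,P)`. Hence the relative rank is the number of unordered pairs of sizes of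
two distinct blocks, which are the pairs of distinct sizes together with the sizes that occur at
least twice.
-/

section FiniteSets

variable {α β : Type*} {s s' : Set α} {t : Set β} {f : α → β}

theorem exists_injOn_mapsTo_eqOn (hs : s.Finite) (hst : s.encard ≤ t.encard) (hs' : s' ⊆ s)
    (hinj : InjOn f s') (hf : MapsTo f s' t) :
    ∃ g : α → β, InjOn g s ∧ MapsTo g s t ∧ EqOn g f s' := by
  classical
  rcases isEmpty_or_nonempty α with _ | ⟨⟨a⟩⟩
  · exact ⟨f, injOn_of_subsingleton f s, fun a _ => isEmptyElim a, fun _ _ => rfl⟩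
  have : Nonempty β := ⟨f a⟩
  have hcard : (s \ s').encard ≤ (t \ f '' s').encard := by
    rw [← encard_sdiff_add_encard_of_subset hs',
      ← encard_sdiff_add_encard_of_subset hf.image_subset, hinj.encard_image] at hst
    exact (ENat.add_le_add_iff_right (hs.subset hs').encard_lt_top.ne).1 hst
  obtain ⟨k, hkmaps, hkinj⟩ := hs.sdiff.exists_injOn_of_encard_le hcard
  have hg : EqOn (s'.piecewise f k) f s' := piecewise_eqOn s' f k
  have hgk : EqOn (s'.piecewise f k) k (s \ s') := fun z hz => piecewise_eq_of_notMem s' f k hz.2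
  refine ⟨s'.piecewise f k, ?_, fun z hz => ?_, hg⟩
  · rw [← union_sdiff_cancel hs', injOn_union disjoint_sdiff_right]
    refine ⟨hinj.congr hg.symm, hkinj.congr hgk.symm, fun a ha b hb hab => ?_⟩
    rw [hg ha, hgk hb] at hab
    exact (hkmaps hb).2 ⟨a, ha, hab⟩
  · by_cases hz' : z ∈ s'
    · exact hg hz' ▸ hf hz'
    · exact hgk ⟨hz, hz'⟩ ▸ (hkmaps ⟨hz, hz'⟩).1

theorem exists_injOn_eqOn_comp (hs : s.Finite) (hst : s.encard ≤ t.encard) (hf : MapsTo f s t) :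
    ∃ (ι : α → β) (ρ : α → α), InjOn ι s ∧ MapsTo ι s t ∧ MapsTo ρ s s ∧ EqOn f (ι ∘ ρ) s := by
  obtain ⟨s', hs', hbij⟩ := (surjOn_image f s).exists_bijOn_subset
  obtain ⟨ι, hι, hιmaps, hιf⟩ :=
    exists_injOn_mapsTo_eqOn hs hst hs' hbij.injOn (hf.mono_left hs')
  choose! ρ hρ hρf using fun z (hz : z ∈ s) => hbij.surjOn (mem_image_of_mem f hz)
  exact ⟨ι, ρ, hι, hιmaps, fun z hz => hs' (hρ z hz),
    fun z hz => (hρf z hz).symm.trans (hιf (hρ z hz)).symm⟩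

theorem exists_leftInvOn_forall_mem (hs : s.Nonempty) (hf : InjOn f s) :
    ∃ g : β → α, (∀ b, g b ∈ s) ∧ LeftInvOn g f s := by
  have : Nonempty s := hs.to_subtype
  exact ⟨fun b => (invFun (s.domRestrict f) b).1, fun _ => Subtype.coe_prop _, fun a ha =>
    congrArg Subtype.val (leftInverse_invFun (injOn_iff_injective.1 hf) ⟨a, ha⟩)⟩

theorem exists_perm_apply_eq_apply_eq {a b a' b' : α} (hab : a ≠ b) (hab' : a' ≠ b')
    (ha : f a = f a') (hb : f b = f b') :
    ∃ σ : Equiv.Perm α, σ a = a' ∧ σ b = b' ∧ ∀ i, f (σ i) = f i := by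
  classical
  let τ := Equiv.swap a a'
  have hτ : ∀ i, f (τ i) = f i := Equiv.apply_swap_eq_self ha
  have hτb : τ b ≠ a' := fun h => hab (τ.injective (by simp [τ, h]))
  refine ⟨τ.trans (Equiv.swap (τ b) b'), ?_, ?_, fun i => ?_⟩
  · simp [τ, Equiv.swap_apply_of_ne_of_ne hτb.symm hab']
  · simp
  · rw [Equiv.trans_apply, Equiv.apply_swap_eq_self ((hτ b).trans hb), hτ]

theorem ncard_image_mk_offDiag (hs : s.Finite) :
    (Sym2.mk.uncurry '' s.offDiag).ncard = s.ncard.choose 2 := by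
  classical
  lift s to Finset α using hs
  rw [← Finset.coe_offDiag, ← Finset.coe_image, ncard_coe_finset, ncard_coe_finset,
    Sym2.card_image_offDiag]

theorem ncard_range_union_range {ι κ : Type*} [Finite ι] [Finite κ] {f : ι → α} {g : κ → α}
    (hf : Injective f) (hg : Injective g) (hfg : ∀ i j, f i ≠ g j) :
    (range f ∪ range g).ncard = Nat.card ι + Nat.card κ := by
  have hdisj : Disjoint (range f) (range g) := by
    rw [disjoint_left]
    rintro _ ⟨i, rfl⟩ ⟨j, hj⟩
    exact hfg i j hj.symm
  rw [ncard_union_eq hdisj, ncard_range_of_injective hf, ncard_range_of_injective hg]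

end FiniteSets

section Blocks

variable {X : Type*} {r : Setoid X} {x y z : X} {f g φ : X → X}

/-- The block of the partition containing `x`. -/
def block (r : Setoid X) (x : X) : Set X := {z | r z x}

/-- The size of the block containing `x`. -/
noncomputable def blockSize (r : Setoid X) (x : X) : ℕ := (block r x).ncard

theorem self_mem_block (r : Setoid X) (x : X) : x ∈ block r x := r.refl x

theorem block_congr (h : r x y) : block r x = block r y :=
  ext fun _ => ⟨fun hz => r.trans hz h, fun hz => r.trans hz (r.symm h)⟩

theorem blockSize_congr (h : r x y) : blockSize r x = blockSize r y :=
  congrArg ncard (block_congr h)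

theorem disjoint_block (h : ¬ r x y) : Disjoint (block r x) (block r y) :=
  disjoint_left.2 fun _ hx hy => h (r.trans (r.symm hx) hy)

theorem encard_block_le_iff [Finite X] :
    (block r x).encard ≤ (block r y).encard ↔ blockSize r x ≤ blockSize r y := by
  rw [← (toFinite (block r x)).cast_ncard_eq, ← (toFinite (block r y)).cast_ncard_eq,
    Nat.cast_le, blockSize, blockSize]

theorem mapsTo_block_of_mem_TSet (hf : f ∈ TSet r) (x : X) :
    MapsTo f (block r x) (block r (f x)) := fun z hz => hf z x hz

theorem id_mem_TSet : id ∈ TSet r := fun _ _ h => h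

variable (r) in
/-- The submonoid of `Function.End X` with carrier `TSet r`. -/
def TSubmonoid : Submonoid (Function.End X) where
  carrier := TSet r
  mul_mem' hf hg _ _ h := hf _ _ (hg _ _ h)
  one_mem' := id_mem_TSet

theorem mem_SigmaSet_iff : f ∈ SigmaSet r ↔ f ∈ TSet r ∧ ∀ y, ∃ x, r (f x) y := by
  refine and_congr_right fun _ => ⟨fun h y => ?_, ?_⟩
  · obtain ⟨_, ⟨x, rfl⟩, hx⟩ := h (block r y) ⟨y, rfl⟩
    exact ⟨x, hx⟩
  · rintro h _ ⟨y, rfl⟩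
    obtain ⟨x, hx⟩ := h y
    exact ⟨f x, mem_range_self x, hx⟩

theorem id_mem_SigmaSet : id ∈ SigmaSet r :=
  mem_SigmaSet_iff.2 ⟨id_mem_TSet, fun y => ⟨y, r.refl y⟩⟩

-- By finiteness, the surjection that `f` induces on the set of blocks is a bijection.
theorem rel_of_mem_SigmaSet [Finite X] (hf : f ∈ SigmaSet r) (h : r (f x) (f y)) : r x y := by
  rw [mem_SigmaSet_iff] at hf
  let F : Quotient r → Quotient r := Quotient.map f hf.1
  have hsurj : Surjective F := by
    rintro ⟨y⟩
    obtain ⟨x, hx⟩ := hf.2 y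
    exact ⟨⟦x⟧, Quotient.sound hx⟩
  exact Quotient.exact (Finite.injective_iff_surjective.2 hsurj (Quotient.sound h : F ⟦x⟧ = F ⟦y⟧))

section Units

variable {u : X → X}

theorem SXP_subset_SigmaSet : SXP r ⊆ SigmaSet r := fun u hu =>
  mem_SigmaSet_iff.2 ⟨fun x y => (hu.2 x y).2, fun y => by
    obtain ⟨x, rfl⟩ := hu.1.surjective y
    exact ⟨x, r.refl _⟩⟩

theorem exists_mem_SXP_comp_eq_id (hu : u ∈ SXP r) : ∃ v : X → X, v ∈ SXP r ∧ v ∘ u = id := by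
  obtain ⟨v, hvu, huv⟩ := bijective_iff_has_inverse.1 hu.1
  refine ⟨v, ⟨bijective_iff_has_inverse.2 ⟨u, huv, hvu⟩, fun x y => ?_⟩, funext hvu⟩
  rw [← hu.2 (v x), huv, huv]

theorem blockSize_apply_of_mem_SXP (hu : u ∈ SXP r) (x : X) :
    blockSize r (u x) = blockSize r x := by
  have himage : block r (u x) = u '' block r x := by
    ext z
    obtain ⟨z, rfl⟩ := hu.1.surjective z
    rw [hu.1.injective.mem_set_image]
    exact hu.2 z x
  rw [blockSize, himage, ncard_image_of_injective _ hu.1.injective, blockSize]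

theorem mem_SXP_of_injOn_block [Finite X] (hu : ∀ x y, r (u x) (u y) ↔ r x y)
    (hinj : ∀ x, InjOn u (block r x)) : u ∈ SXP r :=
  ⟨Finite.injective_iff_bijective.1 fun x y h =>
    hinj y ((hu x y).1 (h ▸ r.refl _)) (self_mem_block r y) h, hu⟩

theorem exists_mem_SXP_rel_rel [Finite X] {x' y' : X} (hxy : ¬ r x y) (hxy' : ¬ r x' y')
    (hx : blockSize r x' = blockSize r x) (hy : blockSize r y' = blockSize r y) :
    ∃ u : X → X, u ∈ SXP r ∧ r (u x') x ∧ r (u y') y := by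
  let size : Quotient r → ℕ := Quotient.lift (blockSize r) fun _ _ => blockSize_congr
  have size_eq (q : Quotient r) : size q = blockSize r q.out := by
    conv_lhs => rw [← q.out_eq]
    rfl
  obtain ⟨σ, hσx, hσy, hσ⟩ := exists_perm_apply_eq_apply_eq (f := size)
    (a := ⟦x'⟧) (b := ⟦y'⟧) (a' := ⟦x⟧) (b' := ⟦y⟧)
    (fun h => hxy' (Quotient.exact h)) (fun h => hxy (Quotient.exact h)) hx hy
  have : Nonempty X := ⟨x⟩
  choose β hβmaps hβinj using fun q : Quotient r =>
    (toFinite (block r q.out)).exists_injOn_of_encard_le (t := block r (σ q).out)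
      (encard_block_le_iff.2 (by rw [← size_eq, ← size_eq, hσ]))
  have mem_block_out (z : X) : z ∈ block r (⟦z⟧ : Quotient r).out := r.symm (Quotient.mk_out z)
  let u : X → X := fun z => β ⟦z⟧ z
  have hu (z : X) : (⟦u z⟧ : Quotient r) = σ ⟦z⟧ := by
    rw [← (σ ⟦z⟧).out_eq]
    exact Quotient.sound (hβmaps _ (mem_block_out z))
  have rel_iff (a b : X) : r a b ↔ (⟦a⟧ : Quotient r) = ⟦b⟧ := Quotient.eq.symm
  refine ⟨u, mem_SXP_of_injOn_block (fun a b => ?_) fun a b hb c hc hbc => ?_, ?_, ?_⟩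
  · rw [rel_iff, rel_iff, hu, hu, σ.injective.eq_iff]
  · have hcb : (⟦c⟧ : Quotient r) = ⟦b⟧ := Quotient.sound (r.trans hc (r.symm hb))
    refine hβinj ⟦b⟧ (mem_block_out b) (hcb ▸ mem_block_out c) ?_
    simpa only [u, hcb] using hbc
  · rw [rel_iff, hu, hσx]
  · rw [rel_iff, hu, hσy]

end Units

section UpdateBlock

open Classical in
/-- The transformation acting as `φ` on the block of `x` and as `g` elsewhere. -/
noncomputable def updateBlock (r : Setoid X) (g : X → X) (x : X) (φ : X → X) : X → X :=
  (block r x).piecewise φ g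

theorem updateBlock_of_mem (h : z ∈ block r x) : updateBlock r g x φ z = φ z :=
  if_pos h

theorem updateBlock_of_notMem (h : z ∉ block r x) : updateBlock r g x φ z = g z :=
  if_neg h

theorem updateBlock_mem_TSet (hg : g ∈ TSet r) (hφ : MapsTo φ (block r x) (block r y)) :
    updateBlock r g x φ ∈ TSet r := by
  intro a b hab
  by_cases hb : b ∈ block r x
  · have ha : a ∈ block r x := r.trans hab hb
    rw [updateBlock_of_mem ha, updateBlock_of_mem hb]
    exact r.trans (hφ ha) (r.symm (hφ hb))
  · have ha : a ∉ block r x := fun ha => hb (r.trans (r.symm hab) ha)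
    rw [updateBlock_of_notMem ha, updateBlock_of_notMem hb]
    exact hg a b hab

theorem updateBlock_rel (hg : g ∈ TSet r) (hφ : MapsTo φ (block r x) (block r (g x))) (z : X) :
    r (updateBlock r g x φ z) (g z) := by
  by_cases hz : z ∈ block r x
  · rw [updateBlock_of_mem hz]
    exact r.trans (hφ hz) (r.symm (hg z x hz))
  · rw [updateBlock_of_notMem hz]

theorem updateBlock_mem_SigmaSet (hg : g ∈ SigmaSet r)
    (hφ : MapsTo φ (block r x) (block r (g x))) : updateBlock r g x φ ∈ SigmaSet r := by
  rw [mem_SigmaSet_iff] at hg ⊢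
  refine ⟨updateBlock_mem_TSet hg.1 hφ, fun y => ?_⟩
  obtain ⟨z, hz⟩ := hg.2 y
  exact ⟨z, r.trans (updateBlock_rel hg.1 hφ z) hz⟩

theorem updateBlock_mem_SXP [Finite X] (hg : g ∈ SXP r)
    (hφ : MapsTo φ (block r x) (block r (g x))) (hinj : InjOn φ (block r x)) :
    updateBlock r g x φ ∈ SXP r := by
  have hrel := updateBlock_rel (SXP_subset_SigmaSet hg).1 hφ
  refine mem_SXP_of_injOn_block (fun a b => ?_) fun a => ?_
  · rw [← hg.2 a]
    exact ⟨fun h => r.trans (r.symm (hrel a)) (r.trans h (hrel b)),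
      fun h => r.trans (hrel a) (r.trans h (r.symm (hrel b)))⟩
  · by_cases ha : r a x
    · rw [block_congr ha]
      exact hinj.congr fun z hz => (updateBlock_of_mem hz).symm
    · exact hg.1.injective.injOn.congr fun z hz =>
        (updateBlock_of_notMem ((disjoint_block ha).notMem_of_mem_left hz)).symm

theorem updateBlock_updateBlock_mem_SigmaSet {ψ : X → X} (hxy : ¬ r x y)
    (hφ : MapsTo φ (block r x) (block r y)) (hψ : MapsTo ψ (block r y) (block r x)) :
    updateBlock r (updateBlock r id y ψ) x φ ∈ SigmaSet r := by
  refine mem_SigmaSet_iff.2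
    ⟨updateBlock_mem_TSet (updateBlock_mem_TSet id_mem_TSet hψ) hφ, fun z => ?_⟩
  by_cases hzx : z ∈ block r x
  · have hyx : y ∉ block r x := fun h => hxy (r.symm h)
    refine ⟨y, ?_⟩
    rw [updateBlock_of_notMem hyx, updateBlock_of_mem (self_mem_block r y)]
    exact r.trans (hψ (self_mem_block r y)) (r.symm hzx)
  by_cases hzy : z ∈ block r y
  · refine ⟨x, ?_⟩
    rw [updateBlock_of_mem (self_mem_block r x)]
    exact r.trans (hφ (self_mem_block r x)) (r.symm hzy)
  · exact ⟨z, by rw [updateBlock_of_notMem hzx, updateBlock_of_notMem hzy]; exact r.refl z⟩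

end UpdateBlock

section Collapses

variable {x' y' : X} {w w' : X → X} {S : Submonoid (Function.End X)}

/-- `w` maps the block of `x` into the block of `y` and fixes every point outside the block
of `x`. Every element of `T(X,P)` is a product of such maps, with `x` and `y` in distinct blocks,
and an element of `Σ(X,P)`. -/
structure IsCollapse (r : Setoid X) (w : X → X) (x y : X) : Prop where
  mapsTo : MapsTo w (block r x) (block r y)
  eqOn_compl : EqOn w id (block r x)ᶜ

theorem isCollapse_updateBlock_id (hφ : MapsTo φ (block r x) (block r y)) :
    IsCollapse r (updateBlock r id x φ) x y where
  mapsTo := hφ.congr fun _ hz => (updateBlock_of_mem hz).symm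
  eqOn_compl _ hz := updateBlock_of_notMem hz

theorem IsCollapse.mem_TSet (hw : IsCollapse r w x y) : w ∈ TSet r := by
  have heq : w = updateBlock r id x w := funext fun z => by
    by_cases hz : z ∈ block r x
    · exact (updateBlock_of_mem hz).symm
    · exact (hw.eqOn_compl hz).trans (updateBlock_of_notMem hz).symm
  exact heq ▸ updateBlock_mem_TSet id_mem_TSet hw.mapsTo

theorem IsCollapse.injOn_block (hw : IsCollapse r w x y)
    (hinj : InjOn w (block r x)) (z : X) : InjOn w (block r z) := by
  by_cases hz : r z x
  · rwa [block_congr hz]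
  · exact (injOn_id _).congr fun a ha =>
      (hw.eqOn_compl ((disjoint_block hz).notMem_of_mem_left ha)).symm

theorem exists_isCollapse_injOn [Finite X] (h : blockSize r x ≤ blockSize r y) :
    ∃ w, IsCollapse r w x y ∧ InjOn w (block r x) := by
  have : Nonempty X := ⟨x⟩
  obtain ⟨ι, hmaps, hinj⟩ :=
    (toFinite (block r x)).exists_injOn_of_encard_le (encard_block_le_iff.2 h)
  exact ⟨_, isCollapse_updateBlock_id hmaps,
    hinj.congr fun z hz => (updateBlock_of_mem hz).symm⟩

theorem exists_mem_SXP_comp_eq_comp [Finite X] (hxy : ¬ r x y) (hxy' : ¬ r x' y')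
    (hx : blockSize r x' = blockSize r x) (hy : blockSize r y' = blockSize r y)
    (hw : IsCollapse r w x y) (hw' : IsCollapse r w' x' y') (hinj' : InjOn w' (block r x'))
    (hinj : InjOn w (block r x)) : ∃ u : X → X, u ∈ SXP r ∧ u ∘ w' = w ∘ u := by
  obtain ⟨v, hv, hvx, hvy⟩ := exists_mem_SXP_rel_rel hxy hxy' hx hy
  have hvmaps : MapsTo v (block r x') (block r x) := fun z hz => r.trans ((hv.2 z x').2 hz) hvx
  obtain ⟨κ, hκmem, hκ⟩ := exists_leftInvOn_forall_mem ⟨x', self_mem_block r x'⟩ hinj'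
  obtain ⟨g, hginj, hgmaps, hg⟩ :=
    exists_injOn_mapsTo_eqOn (f := w ∘ v ∘ κ) (toFinite (block r y')) (t := block r y)
      (encard_block_le_iff.2 hy.le) hw'.mapsTo.image_subset
      (by
        rintro _ ⟨a, ha, rfl⟩ _ ⟨b, hb, rfl⟩ hab
        simp only [comp_apply, hκ ha, hκ hb] at hab
        rw [hv.1.injective (hinj (hvmaps ha) (hvmaps hb) hab)])
      (fun z _ => hw.mapsTo (hvmaps (hκmem z)))
  refine ⟨updateBlock r v y' g, updateBlock_mem_SXP hv (block_congr hvy ▸ hgmaps) hginj, ?_⟩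
  funext z
  change updateBlock r v y' g (w' z) = w (updateBlock r v y' g z)
  by_cases hz : z ∈ block r x'
  · rw [updateBlock_of_mem (hw'.mapsTo hz), hg (mem_image_of_mem w' hz),
      updateBlock_of_notMem ((disjoint_block hxy').notMem_of_mem_left hz)]
    simp only [comp_apply, hκ hz]
  · have hnotMem : updateBlock r v y' g z ∉ block r x := fun h => hz <| (hv.2 z x').1 <|
      r.trans (r.symm (updateBlock_rel (SXP_subset_SigmaSet hv).1 (block_congr hvy ▸ hgmaps) z))
        (r.trans h (r.symm hvx))
    rw [hw'.eqOn_compl hz, id, hw.eqOn_compl hnotMem, id]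

theorem IsCollapse.exists_eq_comp_of_blockSize_le [Finite X]
    (hle : blockSize r x ≤ blockSize r y) (hw : IsCollapse r w x y) :
    ∃ w', IsCollapse r w' x y ∧ InjOn w' (block r x) ∧ ∃ s ∈ SigmaSet r, w = w' ∘ s := by
  obtain ⟨ι, ρ, hιinj, hι, hρ, heq⟩ :=
    exists_injOn_eqOn_comp (toFinite _) (encard_block_le_iff.2 hle) hw.mapsTo
  refine ⟨updateBlock r id x ι, isCollapse_updateBlock_id hι,
    hιinj.congr fun z hz => (updateBlock_of_mem hz).symm, updateBlock r id x ρ,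
    updateBlock_mem_SigmaSet id_mem_SigmaSet hρ, ?_⟩
  funext z
  change w z = updateBlock r id x ι (updateBlock r id x ρ z)
  by_cases hz : z ∈ block r x
  · rw [updateBlock_of_mem hz, updateBlock_of_mem (hρ hz), heq hz, comp_apply]
  · rw [updateBlock_of_notMem hz]
    exact (hw.eqOn_compl hz).trans (updateBlock_of_notMem hz).symm

-- `w` first sends the block of `x` into itself along `w' ∘ w`; after `w'` has emptied the block of
-- `y`, the second factor from `Σ(X,P)` brings its points back by a left inverse of `w'`.
theorem IsCollapse.exists_eq_comp_comp (hxy : ¬ r x y) (hw : IsCollapse r w x y)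
    (hw' : IsCollapse r w' y x) (hinj : InjOn w' (block r y)) :
    ∃ s ∈ SigmaSet r, ∃ s' ∈ SigmaSet r, w = s ∘ w' ∘ s' := by
  obtain ⟨κ, hκmem, hκ⟩ := exists_leftInvOn_forall_mem ⟨y, self_mem_block r y⟩ hinj
  refine ⟨_, updateBlock_updateBlock_mem_SigmaSet hxy (fun z _ => hκmem z) hw'.mapsTo,
    updateBlock r id x (w' ∘ w),
    updateBlock_mem_SigmaSet id_mem_SigmaSet (hw'.mapsTo.comp hw.mapsTo), ?_⟩
  funext z
  change w z = updateBlock r _ x κ (w' (updateBlock r id x (w' ∘ w) z))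
  by_cases hzx : z ∈ block r x
  · have hmem : w' (w z) ∈ block r x := hw'.mapsTo (hw.mapsTo hzx)
    rw [updateBlock_of_mem hzx, comp_apply,
      hw'.eqOn_compl ((disjoint_block hxy).notMem_of_mem_left hmem), id, updateBlock_of_mem hmem,
      hκ (hw.mapsTo hzx)]
  rw [updateBlock_of_notMem hzx, hw.eqOn_compl hzx]
  change z = updateBlock r _ x κ (w' z)
  by_cases hzy : z ∈ block r y
  · rw [updateBlock_of_mem (hw'.mapsTo hzy), hκ hzy]
  · rw [hw'.eqOn_compl hzy, id, updateBlock_of_notMem hzx, updateBlock_of_notMem hzy]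
    rfl

-- If `f` misses the block of `x`, then `f` is a collapse of that block after a map that fixes the
-- block of `x` and agrees with `f` elsewhere; the induction is on the number of points that leave
-- their block.
theorem mem_of_forall_isCollapse_mem [Finite X] (hS : SigmaSet r ⊆ S)
    (hcollapse : ∀ w x y, ¬ r x y → IsCollapse r w x y → w ∈ S) (hf : f ∈ TSet r) :
    f ∈ S := by
  induction hN : {y | ¬ r (f y) y}.ncard using Nat.strong_induction_on generalizing f with
  | _ N ih =>
    by_cases hs : f ∈ SigmaSet r
    · exact hS hs
    obtain ⟨x, hx⟩ : ∃ x, ∀ z, ¬ r (f z) x := by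
      rw [mem_SigmaSet_iff] at hs
      simpa only [hf, true_and, not_forall, not_exists] using hs
    let f' := updateBlock r f x id
    have hf' : f' ∈ TSet r := updateBlock_mem_TSet hf (mapsTo_id _)
    have hf'_of_mem {z} (hz : z ∈ block r x) : f' z = z := updateBlock_of_mem hz
    have hf'_of_notMem {z} (hz : z ∉ block r x) : f' z = f z := updateBlock_of_notMem hz
    have hlt : {y | ¬ r (f' y) y} ⊂ {y | ¬ r (f y) y} := by
      refine ⟨fun y hy hfy => ?_, fun h => h (hx x) ?_⟩
      · by_cases hyx : y ∈ block r x
        · exact hy (by rw [hf'_of_mem hyx])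
        · exact hy (by rwa [hf'_of_notMem hyx])
      · rw [hf'_of_mem (self_mem_block r x)]
    have heq : f = updateBlock r id x f ∘ f' := by
      funext z
      by_cases hz : z ∈ block r x
      · rw [comp_apply, hf'_of_mem hz, updateBlock_of_mem hz]
      · rw [comp_apply, hf'_of_notMem hz, updateBlock_of_notMem (hx z), id]
    rw [heq]
    exact S.mul_mem (hcollapse _ x (f x) (fun h => hx x (r.symm h))
        (isCollapse_updateBlock_id (mapsTo_block_of_mem_TSet hf x)))
      (ih _ (hN ▸ ncard_lt_ncard hlt) hf' rfl)

end Collapses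

section Merges

variable {x' y' : X}

/-- `f` maps two points into the same block exactly when they lie in the same block or one of them
lies in the block of `x` and the other in the block of `y`. -/
def IsMerge (r : Setoid X) (f : X → X) (x y : X) : Prop :=
  ∀ a b, r (f a) (f b) ↔ r a b ∨ (r a x ∧ r b y) ∨ (r a y ∧ r b x)

theorem IsCollapse.isMerge {w : X → X} (hw : IsCollapse r w x y) : IsMerge r w x y := by
  have rel_of_mem {a} (ha : r a x) : r (w a) y := hw.mapsTo ha
  have eq_of_notMem {a} (ha : ¬ r a x) : w a = a := hw.eqOn_compl ha
  intro a b
  by_cases ha : r a x <;> by_cases hb : r b x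
  · have hab : r a b := r.trans ha (r.symm hb)
    exact iff_of_true (hw.mem_TSet a b hab) (.inl hab)
  · rw [eq_of_notMem hb]
    refine ⟨fun h => .inr (.inl ⟨ha, r.trans (r.symm h) (rel_of_mem ha)⟩), ?_⟩
    rintro (h | ⟨-, h⟩ | ⟨-, h⟩)
    · exact absurd (r.trans (r.symm h) ha) hb
    · exact r.trans (rel_of_mem ha) (r.symm h)
    · exact absurd h hb
  · rw [eq_of_notMem ha]
    refine ⟨fun h => .inr (.inr ⟨r.trans h (rel_of_mem hb), hb⟩), ?_⟩
    rintro (h | ⟨h, -⟩ | ⟨h, -⟩)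
    · exact absurd (r.trans h hb) ha
    · exact absurd h ha
    · exact r.trans h (r.symm (rel_of_mem hb))
  · simp [eq_of_notMem ha, eq_of_notMem hb, ha, hb]

theorem IsMerge.rel_apply (hf : IsMerge r f x y) : r (f x) (f y) :=
  (hf x y).2 (.inr (.inl ⟨r.refl x, r.refl y⟩))

theorem IsMerge.blockSize_pair_eq (hxy : ¬ r x y) (hf : IsMerge r f x y)
    (hf' : IsMerge r f x' y') :
    s(blockSize r x, blockSize r y) = s(blockSize r x', blockSize r y') := by
  rcases (hf' x y).1 hf.rel_apply with h | ⟨hx, hy⟩ | ⟨hx, hy⟩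
  · exact absurd h hxy
  · rw [blockSize_congr hx, blockSize_congr hy]
  · rw [blockSize_congr hx, blockSize_congr hy, Sym2.eq_swap]

theorem IsMerge.of_comp_of_rel (hg : g ∈ TSet r) (hf : f ∈ TSet r) (h : r (f x) (f y))
    (hgf : IsMerge r (g ∘ f) x y) : IsMerge r f x y := by
  refine fun a b => ⟨fun hab => (hgf a b).1 (hg _ _ hab), ?_⟩
  rintro (hab | ⟨ha, hb⟩ | ⟨ha, hb⟩)
  · exact hf a b hab
  · exact r.trans (hf a x ha) (r.trans h (r.symm (hf b y hb)))
  · exact r.trans (hf a y ha) (r.trans (r.symm h) (r.symm (hf b x hb)))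

theorem IsMerge.mem_SXP_of_comp [Finite X] (hg : g ∈ TSet r) (hf : f ∈ TSet r)
    (h : ¬ r (f x) (f y)) (hinj : ∀ z, InjOn f (block r z)) (hgf : IsMerge r (g ∘ f) x y) :
    f ∈ SXP r := by
  refine mem_SXP_of_injOn_block (fun a b => ⟨fun hab => ?_, hf a b⟩) hinj
  rcases (hgf a b).1 (hg _ _ hab) with hab' | ⟨ha, hb⟩ | ⟨ha, hb⟩
  · exact hab'
  · exact absurd (r.trans (r.symm (hf a x ha)) (r.trans hab (hf b y hb))) h
  · exact absurd (r.trans (r.symm (hf b x hb)) (r.trans (r.symm hab) (hf a y ha))) h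

theorem IsMerge.of_comp_mem_SXP (hf : f ∈ SXP r) (hgf : IsMerge r (g ∘ f) x y) :
    IsMerge r g (f x) (f y) := by
  intro a b
  obtain ⟨a, rfl⟩ := hf.1.surjective a
  obtain ⟨b, rfl⟩ := hf.1.surjective b
  rw [hf.2, hf.2, hf.2, hf.2, hf.2]
  exact hgf a b

theorem injOn_block_of_comp_mem_SXP (hf : f ∈ SXP r)
    (hgf : ∀ z, InjOn (g ∘ f) (block r z)) (z : X) : InjOn g (block r z) := by
  obtain ⟨z, rfl⟩ := hf.1.surjective z
  intro a ha b hb hab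
  obtain ⟨a, rfl⟩ := hf.1.surjective a
  obtain ⟨b, rfl⟩ := hf.1.surjective b
  exact congrArg f (hgf z ((hf.2 a z).1 ha) ((hf.2 b z).1 hb) hab)

theorem exists_mem_isMerge_of_mem_closure [Finite X] {W : Set (Function.End X)}
    (hW : W ⊆ TSet r) {f : Function.End X} (hf : f ∈ Submonoid.closure (SigmaSet r ∪ W))
    (hinj : ∀ z, InjOn f (block r z)) (hxy : ¬ r x y) (hmerge : IsMerge r f x y) :
    ∃ w ∈ W, ∃ x' y', ¬ r x' y' ∧ IsMerge r w x' y' ∧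
      s(blockSize r x', blockSize r y') = s(blockSize r x, blockSize r y) := by
  have hclosure : Submonoid.closure (SigmaSet r ∪ W) ≤ TSubmonoid r :=
    Submonoid.closure_le.2 (union_subset (fun _ h => h.1) hW)
  induction hf using Submonoid.closure_induction generalizing x y with
  | mem f hf =>
    rcases hf with hf | hf
    · exact absurd (rel_of_mem_SigmaSet hf hmerge.rel_apply) hxy
    · exact ⟨f, hf, x, y, hxy, hmerge, rfl⟩
  | one => exact absurd hmerge.rel_apply hxy
  | mul g f hg hf ihg ihf =>
    have hinj_f (z) : InjOn f (block r z) := InjOn.of_comp (g := g) (hinj z)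
    by_cases h : r (f x) (f y)
    · exact ihf hinj_f hxy (hmerge.of_comp_of_rel (hclosure hg) (hclosure hf) h)
    · have hf_unit : f ∈ SXP r := hmerge.mem_SXP_of_comp (hclosure hg) (hclosure hf) h hinj_f
      have := ihg (injOn_block_of_comp_mem_SXP hf_unit hinj) h (hmerge.of_comp_mem_SXP hf_unit)
      simpa only [blockSize_apply_of_mem_SXP hf_unit] using this

end Merges

section RelRank

variable {x' y' : X} {w w' : X → X} {S : Submonoid (Function.End X)}

theorem IsCollapse.mem_of_blockSize_pair_eq [Finite X] (hS : SigmaSet r ⊆ S)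
    (hle : blockSize r x ≤ blockSize r y) (hxy : ¬ r x y) (hw : IsCollapse r w x y)
    (hinj : InjOn w (block r x)) (hwS : w ∈ S) (hxy' : ¬ r x' y') (hw' : IsCollapse r w' x' y')
    (hsize : s(blockSize r x', blockSize r y') = s(blockSize r x, blockSize r y)) : w' ∈ S := by
  have mem_of_injOn {w' : X → X} {x' y' : X} (hxy' : ¬ r x' y')
      (hx : blockSize r x' = blockSize r x) (hy : blockSize r y' = blockSize r y)
      (hw' : IsCollapse r w' x' y') (hinj' : InjOn w' (block r x')) : w' ∈ S := by
    obtain ⟨u, hu, huw⟩ := exists_mem_SXP_comp_eq_comp hxy hxy' hx hy hw hw' hinj' hinj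
    obtain ⟨v, hv, hvu⟩ := exists_mem_SXP_comp_eq_id hu
    have heq : w' = v ∘ w ∘ u := by rw [← huw, ← comp_assoc, hvu, id_comp]
    rw [heq]
    exact S.mul_mem (hS (SXP_subset_SigmaSet hv))
      (S.mul_mem hwS (hS (SXP_subset_SigmaSet hu)))
  rcases Sym2.eq_iff.1 hsize with ⟨hx, hy⟩ | ⟨hx, hy⟩
  · obtain ⟨ι, hι, hιinj, s, hs, rfl⟩ := hw'.exists_eq_comp_of_blockSize_le (by rwa [hx, hy])
    exact S.mul_mem (mem_of_injOn hxy' hx hy hι hιinj) (hS hs)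
  · obtain ⟨ι, hι, hιinj⟩ :=
      exists_isCollapse_injOn (r := r) (x := y') (y := x') (by rwa [hx, hy])
    obtain ⟨s, hs, s', hs', rfl⟩ := hw'.exists_eq_comp_comp hxy' hι hιinj
    exact S.mul_mem (hS hs)
      (S.mul_mem (mem_of_injOn (fun h => hxy' (r.symm h)) hy hx hι hιinj) (hS hs'))

/-- The unordered pairs of sizes of two distinct blocks. -/
def blockSizePairs (r : Setoid X) : Set (Sym2 ℕ) :=
  {k | ∃ x y, ¬ r x y ∧ s(blockSize r x, blockSize r y) = k}

theorem finite_blockSizePairs [Finite X] : (blockSizePairs r).Finite :=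
  (finite_range fun z : X × X => s(blockSize r z.1, blockSize r z.2)).subset <| by
    rintro _ ⟨x, y, -, rfl⟩
    exact ⟨(x, y), rfl⟩

theorem exists_isCollapse_injOn_of_mem_blockSizePairs [Finite X] {k : Sym2 ℕ}
    (hk : k ∈ blockSizePairs r) :
    ∃ (w : X → X) (x y : X), ¬ r x y ∧ blockSize r x ≤ blockSize r y ∧ IsCollapse r w x y ∧
      InjOn w (block r x) ∧ s(blockSize r x, blockSize r y) = k := by
  obtain ⟨x, y, hxy, rfl⟩ := hk
  rcases le_total (blockSize r x) (blockSize r y) with hle | hle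
  · obtain ⟨w, hw, hinj⟩ := exists_isCollapse_injOn hle
    exact ⟨w, x, y, hxy, hle, hw, hinj, rfl⟩
  · obtain ⟨w, hw, hinj⟩ := exists_isCollapse_injOn hle
    exact ⟨w, y, x, fun h => hxy (r.symm h), hle, hw, hinj, Sym2.eq_swap⟩

theorem exists_closure_eq_TSet [Finite X] (r : Setoid X) :
    ∃ W ⊆ TSet r, W.Finite ∧ W.ncard ≤ (blockSizePairs r).ncard ∧
      (Submonoid.closure (SigmaSet r ∪ W) : Set (Function.End X)) = TSet r := by
  have : Nonempty (X → X) := ⟨id⟩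
  choose! w hw using
    fun k (hk : k ∈ blockSizePairs r) => exists_isCollapse_injOn_of_mem_blockSizePairs hk
  let W : Set (Function.End X) := w '' blockSizePairs r
  have hWT : W ⊆ TSet r := by
    rintro _ ⟨k, hk, rfl⟩
    obtain ⟨x, y, -, -, hwk, -, -⟩ := hw k hk
    exact hwk.mem_TSet
  refine ⟨W, hWT, finite_blockSizePairs.image w, ncard_image_le finite_blockSizePairs,
    Subset.antisymm ?_ fun f hf => ?_⟩
  · exact (Submonoid.closure_le (S := TSubmonoid r)).2 (union_subset (fun _ h => h.1) hWT)
  · have hS : SigmaSet r ⊆ Submonoid.closure (SigmaSet r ∪ W) :=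
      subset_union_left.trans Submonoid.subset_closure
    refine mem_of_forall_isCollapse_mem hS (fun w' x' y' hxy' hw' => ?_) hf
    have hk : s(blockSize r x', blockSize r y') ∈ blockSizePairs r := ⟨x', y', hxy', rfl⟩
    obtain ⟨x, y, hxy, hle, hwk, hinj, hsize⟩ := hw _ hk
    exact hwk.mem_of_blockSize_pair_eq hS hle hxy hinj
      (Submonoid.subset_closure (.inr (mem_image_of_mem w hk))) hxy' hw' hsize.symm

theorem ncard_blockSizePairs_le_of_closure_eq [Finite X] {W : Set (Function.End X)}
    (hW : W ⊆ TSet r) (hfin : W.Finite)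
    (hclosure : (Submonoid.closure (SigmaSet r ∪ W) : Set (Function.End X)) = TSet r) :
    (blockSizePairs r).ncard ≤ W.ncard := by
  have exists_isMerge {k} (hk : k ∈ blockSizePairs r) : ∃ w ∈ W, ∃ x y, ¬ r x y ∧
      IsMerge r w x y ∧ s(blockSize r x, blockSize r y) = k := by
    obtain ⟨w, x, y, hxy, -, hw, hinj, rfl⟩ := exists_isCollapse_injOn_of_mem_blockSizePairs hk
    exact exists_mem_isMerge_of_mem_closure hW (hclosure.ge hw.mem_TSet)
      (hw.injOn_block hinj) hxy hw.isMerge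
  choose! w hwW hw using fun k => exists_isMerge (k := k)
  refine ncard_le_ncard_of_injOn w hwW (fun k hk k' hk' h => ?_) hfin
  obtain ⟨x, y, hxy, hmerge, rfl⟩ := hw k hk
  obtain ⟨x', y', -, hmerge', rfl⟩ := hw k' hk'
  exact hmerge.blockSize_pair_eq hxy (h ▸ hmerge')

theorem relRank_TSet_SigmaSet [Finite X] (r : Setoid X) :
    relRank (TSet r) (SigmaSet r) = (blockSizePairs r).ncard := by
  obtain ⟨W, hW, hfin, hcard, hclosure⟩ := exists_closure_eq_TSet r
  rw [relRank]
  refine le_antisymm (le_trans (Nat.sInf_le ⟨W, hW, hfin, rfl, hclosure⟩) hcard)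
    (le_csInf ⟨_, W, hW, hfin, rfl, hclosure⟩ ?_)
  rintro _ ⟨W', hW', hfin', rfl, hclosure'⟩
  exact ncard_blockSizePairs_le_of_closure_eq hW' hfin' hclosure'

end RelRank

section Counting

/-- The sizes occurring for at least `k` blocks. -/
def blockSizes (r : Setoid X) (k : ℕ) : Set ℕ := {s | k ≤ blockCount r s}

theorem one_le_blockCount_iff [Finite X] {s : ℕ} :
    1 ≤ blockCount r s ↔ ∃ x, blockSize r x = s := by
  rw [blockCount, Nat.one_le_iff_ne_zero, ← Nat.pos_iff_ne_zero, ncard_pos]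
  constructor
  · rintro ⟨_, ⟨x, rfl⟩, hs⟩
    exact ⟨x, hs⟩
  · rintro ⟨x, hs⟩
    exact ⟨block r x, ⟨x, rfl⟩, hs⟩

theorem two_le_blockCount_iff [Finite X] {s : ℕ} :
    2 ≤ blockCount r s ↔ ∃ x y, ¬ r x y ∧ blockSize r x = s ∧ blockSize r y = s := by
  rw [blockCount, Nat.succ_le_iff, one_lt_ncard_iff]
  constructor
  · rintro ⟨_, _, ⟨⟨x, rfl⟩, hx⟩, ⟨⟨y, rfl⟩, hy⟩, hne⟩
    exact ⟨x, y, fun h => hne (block_congr h), hx, hy⟩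
  · rintro ⟨x, y, hxy, hx, hy⟩
    exact ⟨block r x, block r y, ⟨⟨x, rfl⟩, hx⟩, ⟨⟨y, rfl⟩, hy⟩,
      (disjoint_block hxy).ne (nonempty_of_mem (self_mem_block r x)).ne_empty⟩

theorem blockCount_zero [Finite X] (r : Setoid X) : blockCount r 0 = 0 := by
  refine Nat.lt_one_iff.1 (not_le.1 fun h => ?_)
  obtain ⟨x, hx⟩ := one_le_blockCount_iff.1 h
  exact ((ncard_pos (toFinite _)).2 ⟨x, self_mem_block r x⟩).ne' hx

theorem finite_blockSizes [Finite X] (r : Setoid X) {k : ℕ} (hk : 1 ≤ k) :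
    (blockSizes r k).Finite :=
  (finite_range (blockSize r)).subset fun s (hs : k ≤ blockCount r s) =>
    one_le_blockCount_iff.1 (hk.trans hs)

theorem blockSizePairs_eq_union [Finite X] (r : Setoid X) : blockSizePairs r =
    Sym2.mk.uncurry '' (blockSizes r 1).offDiag ∪ Sym2.diag '' blockSizes r 2 := by
  ext k
  constructor
  · rintro ⟨x, y, hxy, rfl⟩
    by_cases h : blockSize r x = blockSize r y
    · exact .inr ⟨_, two_le_blockCount_iff.2 ⟨x, y, hxy, rfl, h.symm⟩, h ▸ rfl⟩
    · exact .inl ⟨(_, _),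
        ⟨one_le_blockCount_iff.2 ⟨x, rfl⟩, one_le_blockCount_iff.2 ⟨y, rfl⟩, h⟩, rfl⟩
  · rintro (⟨⟨_, _⟩, ⟨ha, hb, hab⟩, rfl⟩ | ⟨s, hs, rfl⟩)
    · obtain ⟨x, rfl⟩ := one_le_blockCount_iff.1 ha
      obtain ⟨y, rfl⟩ := one_le_blockCount_iff.1 hb
      exact ⟨x, y, fun h => hab (blockSize_congr h), rfl⟩
    · obtain ⟨x, y, hxy, rfl, hy⟩ := two_le_blockCount_iff.1 hs
      exact ⟨x, y, hxy, hy ▸ rfl⟩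

theorem ncard_blockSizePairs [Finite X] (r : Setoid X) : (blockSizePairs r).ncard =
    (blockSizes r 1).ncard.choose 2 + (blockSizes r 2).ncard := by
  have hdisj : Disjoint (Sym2.mk.uncurry '' (blockSizes r 1).offDiag)
      (Sym2.diag '' blockSizes r 2) := by
    rw [disjoint_left]
    rintro _ ⟨⟨a, b⟩, ⟨-, -, hab⟩, rfl⟩ ⟨s, -, h⟩
    rcases Sym2.eq_iff.1 h with ⟨rfl, rfl⟩ | ⟨rfl, rfl⟩ <;> exact hab rfl
  have hfin : (blockSizes r 1).Finite := finite_blockSizes r le_rfl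
  rw [blockSizePairs_eq_union, ncard_union_eq hdisj (hfin.offDiag.image _)
    ((finite_blockSizes r one_le_two).image _), ncard_image_mk_offDiag hfin,
    ncard_image_of_injective _ Sym2.diag_injective]

theorem ncard_blockSizes [Finite X] (r : Setoid X) {k : ℕ} (hk : 1 ≤ k) : (blockSizes r k).ncard =
    {s | 2 ≤ s ∧ k ≤ blockCount r s}.ncard + if k ≤ blockCount r 1 then 1 else 0 := by
  have hfin : {s | 2 ≤ s ∧ k ≤ blockCount r s}.Finite :=
    (finite_blockSizes r hk).subset fun _ h => h.2
  have hzero : ¬ k ≤ blockCount r 0 := by rw [blockCount_zero]; lia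
  split_ifs with h
  · have heq : blockSizes r k = insert 1 {s | 2 ≤ s ∧ k ≤ blockCount r s} := by
      ext (_ | _ | s) <;> simp [blockSizes, hzero, h]
    rw [heq, ncard_insert_of_notMem (by simp) hfin]
  · congr 1
    ext (_ | _ | s) <;> simp [blockSizes, hzero, h]

theorem choose_two_add_eq_add_hh (p q t : ℕ) :
    (p + q + if 1 ≤ t then 1 else 0).choose 2 + (p + if 2 ≤ t then 1 else 0) =
      (p + q).choose 2 + p + hh p q t := by
  have hpascal : (p + q + 1).choose 2 = p + q + (p + q).choose 2 := by
    rw [Nat.choose_succ_succ', Nat.choose_one_right]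
  grind [hh]

end Counting

end Blocks

/-- The relative rank of `T(X,P)` modulo `Σ(X,P)` equals
`C(p+q,2) + p + h(p,q,t)`. -/
theorem relRank_TXP_SigmaXP' {X : Type*} [Fintype X] [Nonempty X] (r : Setoid X)
    (p q t : ℕ) (n m : Fin p → ℕ) (l : Fin q → ℕ)
    (hn2 : ∀ i, 2 ≤ n i) (hm2 : ∀ i, 2 ≤ m i) (hl2 : ∀ j, 2 ≤ l j)
    (hninj : Function.Injective n) (hlinj : Function.Injective l)
    (hnl : ∀ i j, n i ≠ l j)
    (hcn : ∀ i, blockCount r (n i) = m i)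
    (hcl : ∀ j, blockCount r (l j) = 1)
    (hct : blockCount r 1 = t)
    (hcover : ∀ s, 2 ≤ s → blockCount r s ≠ 0 → (∃ i, s = n i) ∨ (∃ j, s = l j))
    : relRank (TSet r) (SigmaSet r) = (p + q).choose 2 + p + hh p q t := by
  have hsizes : {s | 2 ≤ s ∧ 1 ≤ blockCount r s} = range n ∪ range l := by
    ext s
    grind
  have hrepeated : {s | 2 ≤ s ∧ 2 ≤ blockCount r s} = range n := by
    ext s
    grind
  rw [relRank_TSet_SigmaSet, ncard_blockSizePairs, ncard_blockSizes r le_rfl,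
    ncard_blockSizes r one_le_two, hsizes, hrepeated, ncard_range_union_range hninj hlinj hnl,
    ncard_range_of_injective hninj, Nat.card_fin, Nat.card_fin, hct, choose_two_add_eq_add_hh]
end

section
/- For every f ∈ Σ(X,P), the submonoid of T(X,P) generated by S(X,P) ∪ ℬ contains a companion of the permutation f̄. -/
open Function Set

/-- Membership in `ℬᵢ`, where `a = dᵢ` and `b = d_{i+1}` are consecutive distinct
block sizes: `f ∈ Σ(X,P)`, and there are blocks `B, B'` of size `a` and `C, C'`
of size `b` such that `f` maps `B` injectively into `C`, maps `C'` onto `B'`, and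
maps every other block bijectively onto a block of the same size. -/
def memB {X : Type*} (r : Setoid X) (a b : ℕ) (f : Function.End X) : Prop :=
  f ∈ SigmaSet r ∧
    ∃ B B' C C' : Set X,
      B ∈ Setoid.classes r ∧ B' ∈ Setoid.classes r ∧
      C ∈ Setoid.classes r ∧ C' ∈ Setoid.classes r ∧
      B.ncard = a ∧ B'.ncard = a ∧ C.ncard = b ∧ C'.ncard = b ∧
      Set.InjOn f B ∧ f '' B ⊆ C ∧ f '' C' = B' ∧
      ∀ D ∈ Setoid.classes r, D ≠ B → D ≠ C' →
        ∃ E ∈ Setoid.classes r, f '' D = E ∧ Set.InjOn f D ∧ E.ncard = D.ncard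

/-- Membership in `𝒞ᵢ`, where `s = dᵢ` is a block size: `f ∈ Σ(X,P)`, `f` maps
every block into a block of the same size, there is one block of size `s` whose
image under `f` has size `s - 1`, and `f` is injective on every other block. -/
def memC {X : Type*} (r : Setoid X) (s : ℕ) (f : Function.End X) : Prop :=
  f ∈ SigmaSet r ∧
    (∀ D ∈ Setoid.classes r, ∃ E ∈ Setoid.classes r, E.ncard = D.ncard ∧ f '' D ⊆ E) ∧
    ∃ B ∈ Setoid.classes r, B.ncard = s ∧ (f '' B).ncard = s - 1 ∧
      ∀ D ∈ Setoid.classes r, D ≠ B → Set.InjOn f D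

/-- `ℬ`: the union of the sets `ℬᵢ` for `1 ≤ i ≤ R − 1`. -/
def Bset {X : Type*} (r : Setoid X) (R : ℕ) (d : ℕ → ℕ) : Set (Function.End X) :=
  {f | ∃ i, 1 ≤ i ∧ i + 1 ≤ R ∧ memB r (d i) (d (i + 1)) f}

/-- `𝒞`: the union of the sets `𝒞ᵢ` for `1 ≤ i ≤ R`. -/
def Cset {X : Type*} (r : Setoid X) (R : ℕ) (d : ℕ → ℕ) : Set (Function.End X) :=
  {f | ∃ i, 1 ≤ i ∧ i ≤ R ∧ memC r (d i) f}

/-- `g` is a companion of the index permutation `σ` (relative to the enumeration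
`Pb` of the blocks): `ḡ = σ`, `g` is injective on `Pb i` whenever
`|Pb i| ≤ |Pb (σ i)|`, and `g` maps `Pb i` onto `Pb (σ i)` whenever
`|Pb i| ≥ |Pb (σ i)|`. -/
def IsCompanion {X : Type*} {N : ℕ} (r : Setoid X) (Pb : Fin N → Set X)
    (σ : Fin N → Fin N) (g : Function.End X) : Prop :=
  g ∈ SigmaSet r ∧ (∀ i, g '' Pb i ⊆ Pb (σ i)) ∧
    (∀ i, (Pb i).ncard ≤ (Pb (σ i)).ncard → Set.InjOn g (Pb i)) ∧
    (∀ i, (Pb (σ i)).ncard ≤ (Pb i).ncard → g '' Pb i = Pb (σ i))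

/-!
A companion of `σ` is a transformation lying over `σ` whose rank on each block `P i` is as large
as possible, namely `min |P i| |P (σ i)|`. Companions `g` of `τ` and `t` of `σ` compose to a
companion `g ∘ u ∘ t` of `τ * σ` once a block-preserving permutation `u` has put the image of `t`
in general position with respect to `g`, provided no block met on the way is a bottleneck:
`min |P i| |P (τ (σ i))| ≤ |P (σ i)|`.

Every permutation of the blocks is a bottleneck-free product of transpositions of blocks of equal
or consecutive sizes: split off a transposition moving a largest block of the support, and
conjugate a transposition of `p` and `q` through a block of intermediate size. Companions of the
remaining transpositions belong to `S(X,P)` or to `ℬ`.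
-/

section PermInduction

variable {ι α : Type*} [Finite ι] [DecidableEq ι] [LinearOrder α] {w : ι → α}
  {motive : Equiv.Perm ι → Prop}

theorem swap_induction_of_weight
    (mul : ∀ {τ σ}, motive τ → motive σ → (∀ i, min (w i) (w (τ (σ i))) ≤ w (σ i)) →
      motive (τ * σ))
    (swap : ∀ p q, w p ≤ w q → (∀ m, w m ≤ w p ∨ w q ≤ w m) → motive (Equiv.swap p q))
    (p q : ι) (hpq : w p ≤ w q) : motive (Equiv.swap p q) := by
  induction hn : (w ⁻¹' Ioo (w p) (w q)).ncard using Nat.strong_induction_on generalizing p q with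
  | _ n ih =>
    subst hn
    by_cases hgap : ∀ m, w m ≤ w p ∨ w q ≤ w m
    · exact swap p q hpq hgap
    push Not at hgap
    obtain ⟨m, hpm, hmq⟩ := hgap
    have hm : m ∈ w ⁻¹' Ioo (w p) (w q) := ⟨hpm, hmq⟩
    have swap_pm : motive (Equiv.swap p m) := by
      refine ih _ (ncard_lt_ncard ⟨?_, fun h => ?_⟩) p m hpm.le rfl
      · exact preimage_mono (Ioo_subset_Ioo_right hmq.le)
      · exact (h hm).2.false
    have swap_mq : motive (Equiv.swap m q) := by
      refine ih _ (ncard_lt_ncard ⟨?_, fun h => ?_⟩) m q hmq.le rfl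
      · exact preimage_mono (Ioo_subset_Ioo_left hpm.le)
      · exact (h hm).1.false
    have hpm' : p ≠ m := ne_of_apply_ne w hpm.ne
    have hpq' : p ≠ q := ne_of_apply_ne w (hpm.trans hmq).ne
    rw [Equiv.swap_comm, ← Equiv.swap_mul_swap_mul_swap hpm' hpq']
    refine mul (mul swap_mq swap_pm fun i => ?_) swap_mq fun i => ?_
    · simp only [Equiv.swap_apply_def]
      grind
    · simp only [Equiv.Perm.mul_apply, Equiv.swap_apply_def]
      grind

theorem perm_induction_of_weight (one : motive 1)
    (mul : ∀ {τ σ}, motive τ → motive σ → (∀ i, min (w i) (w (τ (σ i))) ≤ w (σ i)) →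
      motive (τ * σ))
    (swap : ∀ p q, w p ≤ w q → (∀ m, w m ≤ w p ∨ w q ≤ w m) → motive (Equiv.swap p q))
    (σ : Equiv.Perm ι) : motive σ := by
  have := Fintype.ofFinite ι
  induction hn : σ.support.card using Nat.strong_induction_on generalizing σ with
  | _ n ih =>
    subst hn
    rcases σ.support.eq_empty_or_nonempty with hσ | hσ
    · rwa [Equiv.Perm.support_eq_empty_iff.mp hσ]
    obtain ⟨q, hq, hmax⟩ := Finset.exists_max_image σ.support w hσ
    have hσq : σ q ∈ σ.support := Equiv.Perm.apply_mem_support.mpr hq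
    have hfactor : σ = Equiv.swap (σ q) (σ (σ q)) * σ * Equiv.swap (σ q) q := by
      rw [Equiv.swap_comm (σ q) (σ (σ q)), ← Equiv.mul_swap_eq_swap_mul, mul_assoc,
        Equiv.swap_mul_self, mul_one]
    have hcard := Equiv.Perm.card_support_swap_mul (Equiv.Perm.mem_support.mp hσq)
    have hbottleneck (i : ι) : min (w i) (w (σ i)) ≤ w (Equiv.swap (σ q) q i) := by
      have := hmax _ hσq
      simp only [Equiv.swap_apply_def]
      grind
    rw [hfactor]
    refine mul (ih _ hcard _ rfl) (swap_induction_of_weight mul swap _ _ (hmax _ hσq)) fun i => ?_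
    rw [← Equiv.Perm.mul_apply, ← hfactor]
    exact hbottleneck i

end PermInduction

section Rank

variable {α β : Type*} [Finite α]

theorem exists_perm_image_eq {A B : Set α} (h : A.ncard = B.ncard) :
    ∃ u : Equiv.Perm α, u '' A = B := by
  classical
  have := Fintype.ofFinite α
  obtain ⟨e⟩ : Nonempty ({x // x ∈ A} ≃ {x // x ∈ B}) := Finite.card_eq.mp h
  have hsub : e.extendSubtype '' A ⊆ B := image_subset_iff.mpr e.extendSubtype_mem
  exact ⟨e.extendSubtype, eq_of_subset_of_ncard_le hsub
    (by rw [ncard_image_of_injective _ e.extendSubtype.injective, h])⟩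

theorem exists_perm_min_ncard_le_ncard_image (g : α → β) (A : Set α) :
    ∃ u : Equiv.Perm α, min A.ncard (range g).ncard ≤ (g '' (u '' A)).ncard := by
  obtain ⟨T, -, hT⟩ := (surjOn_image g univ).exists_bijOn_subset
  rw [image_univ] at hT
  have hTcard : T.ncard = (range g).ncard := by rw [← hT.image_eq, hT.injOn.ncard_image]
  obtain ⟨A₀, hA₀, hA₀card⟩ := exists_subset_card_eq (min_le_left A.ncard T.ncard)
  obtain ⟨T₀, hT₀, hT₀card⟩ := exists_subset_card_eq (min_le_right A.ncard T.ncard)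
  obtain ⟨u, hu⟩ := exists_perm_image_eq (hA₀card.trans hT₀card.symm)
  refine ⟨u, ?_⟩
  calc min A.ncard (range g).ncard = (g '' (u '' A₀)).ncard := by
        rw [hu, (hT.injOn.mono hT₀).ncard_image, hT₀card, hTcard]
    _ ≤ (g '' (u '' A)).ncard := ncard_le_ncard (image_mono (image_mono hA₀))

theorem exists_fiberwise_perm_min_ncard_le_ncard_image {ι : Type*} (idx : α → ι) (g : α → β)
    {A : ι → Set α} (hA : ∀ i, A i ⊆ idx ⁻¹' {i}) :
    ∃ u : Equiv.Perm α, (∀ x, idx (u x) = idx x) ∧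
      ∀ i, min (A i).ncard (g '' (idx ⁻¹' {i})).ncard ≤ (g '' (u '' A i)).ncard := by
  choose u hu using fun i => exists_perm_min_ncard_le_ncard_image
    (fun x : {x // idx x = i} => g x) (Subtype.val ⁻¹' A i)
  refine ⟨Equiv.ofFiberEquiv u, Equiv.ofFiberEquiv_map u, fun i => ?_⟩
  have hval : Subtype.val '' (Subtype.val ⁻¹' A i : Set {x // idx x = i}) = A i :=
    Subtype.image_preimage_val _ _ |>.trans (inter_eq_right.mpr (hA i))
  have hrange : range (fun x : {x // idx x = i} => g x) = g '' (idx ⁻¹' {i}) := by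
    rw [image_eq_range]
    rfl
  have hglue (x : {x // idx x = i}) : Equiv.ofFiberEquiv u x = u i x := by
    obtain ⟨x, rfl⟩ := x
    rfl
  have himage : Equiv.ofFiberEquiv u '' A i =
      Subtype.val '' (u i '' (Subtype.val ⁻¹' A i)) := by
    conv_lhs => rw [← hval]
    simp only [image_image, hglue]
  rw [himage, image_image, ← hrange, ← hval, ncard_image_of_injective _ Subtype.val_injective, hval]
  exact hu i

theorem exists_mapsTo_min_ncard_le_ncard_image (A : Set α) {B : Set β} (hB : B.Nonempty) :
    ∃ f : α → β, MapsTo f A B ∧ min A.ncard B.ncard ≤ (f '' A).ncard := by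
  classical
  obtain ⟨b, hb⟩ := hB
  have : Nonempty β := ⟨b⟩
  obtain ⟨A₀, hA₀, hA₀card⟩ := exists_subset_card_eq (min_le_left A.ncard B.ncard)
  have hle : A₀.encard ≤ B.encard := by
    rw [← A₀.toFinite.cast_ncard_eq, hA₀card]
    exact (Nat.cast_le.mpr (min_le_right _ _)).trans B.ncard_le_encard
  obtain ⟨f, hf, hfinj⟩ := A₀.toFinite.exists_injOn_of_encard_le hle
  have hext : EqOn (A₀.piecewise f fun _ => b) f A₀ := piecewise_eqOn _ _ _
  refine ⟨A₀.piecewise f fun _ => b, fun x _ => ?_, ?_⟩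
  · by_cases hx : x ∈ A₀
    · rw [hext hx]
      exact hf hx
    · rwa [piecewise_eq_of_notMem _ _ _ hx]
  · rw [← hA₀card, ← hfinj.ncard_image, ← hext.image_eq]
    exact ncard_le_ncard (image_mono hA₀)

end Rank

theorem mem_sxp_ker {X ι : Type*} {idx : X → ι} {σ : Equiv.Perm ι} {t : Function.End X}
    (ht : Bijective t) (hσ : Semiconj idx t σ) : t ∈ SXP (Setoid.ker idx) :=
  ⟨ht, fun x y => by simp only [Setoid.ker_def, hσ.eq, σ.injective.eq_iff]⟩

/-- A companion of `σ` in rank form: `t` maps the block `idx ⁻¹' {i}` into the block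
`idx ⁻¹' {σ i}`, and its rank there is at least the smaller of the two block sizes, the largest
rank possible. Blocks are encoded as the fibres of a map `idx`, and the two clauses of
`IsCompanion` (injectivity and surjectivity) become a single inequality. -/
structure IsRankCompanion {X ι : Type*} (idx : X → ι) (σ : Equiv.Perm ι) (t : Function.End X) :
    Prop where
  semiconj : Semiconj idx t σ
  min_ncard_le (i : ι) :
    min (idx ⁻¹' {i}).ncard (idx ⁻¹' {σ i}).ncard ≤ (t '' (idx ⁻¹' {i})).ncard

namespace IsRankCompanion

variable {X ι : Type*} {idx : X → ι} {σ τ : Equiv.Perm ι} {t g : Function.End X}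

theorem one : IsRankCompanion idx 1 1 where
  semiconj _ := rfl
  min_ncard_le i := by simp [Function.End.one_def]

theorem image_subset (ht : IsRankCompanion idx σ t) (i : ι) :
    t '' (idx ⁻¹' {i}) ⊆ idx ⁻¹' {σ i} := by
  rintro _ ⟨x, rfl, rfl⟩
  exact ht.semiconj x

theorem exists_of_surjective [Finite X] (hidx : Surjective idx) (σ : Equiv.Perm ι) :
    ∃ t, IsRankCompanion idx σ t := by
  choose f hf hrank using fun i => exists_mapsTo_min_ncard_le_ncard_image (idx ⁻¹' {i})
    (hidx.nonempty_preimage.mpr (singleton_nonempty (σ i)))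
  refine ⟨fun x => f (idx x) x, fun x => hf (idx x) rfl, fun i => ?_⟩
  have heq : EqOn (fun x => f (idx x) x) (f i) (idx ⁻¹' {i}) := by
    rintro x rfl
    rfl
  rw [heq.image_eq]
  exact hrank i

variable [Finite X]

theorem exists_mem_sxp_mul (hg : IsRankCompanion idx τ g) (ht : IsRankCompanion idx σ t)
    (h : ∀ i, min (idx ⁻¹' {i}).ncard (idx ⁻¹' {τ (σ i)}).ncard ≤ (idx ⁻¹' {σ i}).ncard) :
    ∃ u ∈ SXP (Setoid.ker idx), IsRankCompanion idx (τ * σ) (g * u * t) := by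
  obtain ⟨u, hu, hrank⟩ := exists_fiberwise_perm_min_ncard_le_ncard_image idx g
    (A := fun j => t '' (idx ⁻¹' {σ.symm j}))
    fun j => by simpa using ht.image_subset (σ.symm j)
  refine ⟨(u : X → X), mem_sxp_ker (σ := 1) u.bijective hu, fun x => ?_, fun i => ?_⟩
  · exact (hg.semiconj _).trans (congrArg τ ((hu _).trans (ht.semiconj x)))
  · calc min (idx ⁻¹' {i}).ncard (idx ⁻¹' {τ (σ i)}).ncard
        ≤ min (t '' (idx ⁻¹' {i})).ncard (g '' (idx ⁻¹' {σ i})).ncard := by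
          have := ht.min_ncard_le i
          have := hg.min_ncard_le (σ i)
          have := h i
          lia
      _ ≤ (g '' (u '' (t '' (idx ⁻¹' {i})))).ncard := by simpa using hrank (σ i)
      _ = ((g ∘ u ∘ t) '' (idx ⁻¹' {i})).ncard := by
          rw [image_comp g, show u ∘ t '' (idx ⁻¹' {i}) = _ from image_comp u t _]

theorem injOn (ht : IsRankCompanion idx σ t) {i : ι}
    (hi : (idx ⁻¹' {i}).ncard ≤ (idx ⁻¹' {σ i}).ncard) : InjOn t (idx ⁻¹' {i}) :=
  injOn_of_ncard_image_eq ((ncard_image_le).antisymm (by simpa [hi] using ht.min_ncard_le i))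

theorem image_eq (ht : IsRankCompanion idx σ t) {i : ι}
    (hi : (idx ⁻¹' {σ i}).ncard ≤ (idx ⁻¹' {i}).ncard) :
    t '' (idx ⁻¹' {i}) = idx ⁻¹' {σ i} :=
  eq_of_subset_of_ncard_le (ht.image_subset i) (by simpa [hi] using ht.min_ncard_le i)

theorem bijective (ht : IsRankCompanion idx σ t)
    (hσ : ∀ i, (idx ⁻¹' {σ i}).ncard ≤ (idx ⁻¹' {i}).ncard) : Bijective t := by
  refine Finite.surjective_iff_bijective.mp fun y => ?_
  have hy : y ∈ t '' (idx ⁻¹' {σ.symm (idx y)}) := by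
    rw [ht.image_eq (hσ _), Equiv.apply_symm_apply]
    rfl
  exact hy.imp fun x => And.right

end IsRankCompanion

section Ker

variable {X ι : Type*} {idx : X → ι} {σ : Equiv.Perm ι} {t : Function.End X}

theorem mem_classes_ker_iff (hidx : Surjective idx) {B : Set X} :
    B ∈ (Setoid.ker idx).classes ↔ ∃ i, idx ⁻¹' {i} = B := by
  rw [hidx.exists]
  exact exists_congr fun x => eq_comm

theorem exists_index_of_enumeration {r : Setoid X} {P : ι → Set X}
    (hmem : ∀ i, P i ∈ r.classes) (hinj : Injective P) (hsurj : ∀ B ∈ r.classes, ∃ i, P i = B) :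
    ∃ idx : X → ι, Surjective idx ∧ r = Setoid.ker idx ∧ P = fun i => idx ⁻¹' {i} := by
  choose idx hidx using fun x => hsurj _ (r.mem_classes x)
  have mem_iff (x : X) (i : ι) : x ∈ P i ↔ idx x = i := by
    have hx : x ∈ P (idx x) := by
      rw [hidx]
      exact r.refl x
    refine ⟨fun hxi => hinj ?_, fun h => h ▸ hx⟩
    exact Setoid.eq_of_mem_classes (hmem _) hx (hmem _) hxi
  refine ⟨idx, fun i => ?_, Setoid.ext fun x y => ?_, funext fun i => Set.ext fun x => mem_iff x i⟩
  · obtain ⟨x, hx⟩ := Setoid.nonempty_of_mem_partition r.isPartition_classes (hmem i)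
    exact ⟨x, (mem_iff x i).mp hx⟩
  · rw [Setoid.ker_def, ← mem_iff, hidx]
    rfl

theorem mem_sigmaSet_ker (hidx : Surjective idx) (hσ : Semiconj idx t σ) :
    t ∈ SigmaSet (Setoid.ker idx) := by
  refine ⟨fun x y hxy => ?_, fun B hB => ?_⟩
  · simp only [Setoid.ker_def, hσ.eq] at hxy ⊢
    rw [hxy]
  · obtain ⟨i, rfl⟩ := (mem_classes_ker_iff hidx).mp hB
    obtain ⟨x, hx⟩ := hidx (σ.symm i)
    exact ⟨t x, mem_range_self x, by simp [hσ.eq, hx]⟩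

theorem bijective_of_mem_sigmaSet [Finite ι] {r : Setoid X} {P : ι → Set X}
    (hmem : ∀ i, P i ∈ r.classes) (hinj : Injective P) (hsurj : ∀ B ∈ r.classes, ∃ i, P i = B)
    (ht : t ∈ SigmaSet r) {F : ι → ι} (hF : ∀ i, t '' P i ⊆ P (F i)) : Bijective F := by
  obtain ⟨idx, -, rfl, rfl⟩ := exists_index_of_enumeration hmem hinj hsurj
  refine Finite.surjective_iff_bijective.mp fun i => ?_
  obtain ⟨_, ⟨x, rfl⟩, hx⟩ := ht.2 _ (hmem i)
  have hFx : idx (t x) = F (idx x) := hF (idx x) ⟨x, rfl, rfl⟩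
  exact ⟨idx x, hFx.symm.trans hx⟩

variable [Finite X]

theorem blockCount_ker_ne_zero_iff (hidx : Surjective idx) {s : ℕ} :
    blockCount (Setoid.ker idx) s ≠ 0 ↔ ∃ i, (idx ⁻¹' {i}).ncard = s := by
  rw [blockCount, ne_eq, ncard_eq_zero, ← ne_eq, ← nonempty_iff_ne_empty]
  simp [Set.Nonempty, mem_classes_ker_iff hidx]

theorem IsRankCompanion.isCompanion {N : ℕ} {idx : X → Fin N} {σ : Equiv.Perm (Fin N)}
    (ht : IsRankCompanion idx σ t) (hidx : Surjective idx) :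
    IsCompanion (Setoid.ker idx) (fun i => idx ⁻¹' {i}) σ t :=
  ⟨mem_sigmaSet_ker hidx ht.semiconj, ht.image_subset, fun _ => ht.injOn, fun _ => ht.image_eq⟩

theorem IsRankCompanion.memB_of_swap [DecidableEq ι] {p q : ι}
    (ht : IsRankCompanion idx (Equiv.swap p q) t) (hidx : Surjective idx)
    (hpq : (idx ⁻¹' {p}).ncard ≤ (idx ⁻¹' {q}).ncard) :
    memB (Setoid.ker idx) (idx ⁻¹' {p}).ncard (idx ⁻¹' {q}).ncard t := by
  have hclass (i : ι) : idx ⁻¹' {i} ∈ (Setoid.ker idx).classes :=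
    (mem_classes_ker_iff hidx).mpr ⟨i, rfl⟩
  refine ⟨mem_sigmaSet_ker hidx ht.semiconj, _, _, _, _, hclass p, hclass p, hclass q, hclass q,
    rfl, rfl, rfl, rfl, ht.injOn (by simpa), by simpa using ht.image_subset p,
    by simpa [hpq] using ht.image_eq (i := q), fun D hD hDp hDq => ?_⟩
  obtain ⟨j, rfl⟩ := (mem_classes_ker_iff hidx).mp hD
  have hj : Equiv.swap p q j = j :=
    Equiv.swap_apply_of_ne_of_ne (fun h => hDp (h ▸ rfl)) (fun h => hDq (h ▸ rfl))
  exact ⟨_, hclass j, by simpa [hj] using ht.image_eq (i := j), ht.injOn (by rw [hj]), rfl⟩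

end Ker

theorem exists_consecutive_of_strictMonoOn {α : Type*} [LinearOrder α] {d : ℕ → α} {s : Set ℕ}
    (hd : StrictMonoOn d s) (hs : s.OrdConnected) {a b : α} (ha : a ∈ d '' s) (hb : b ∈ d '' s)
    (hab : a < b) (hgap : ∀ c ∈ d '' s, c ≤ a ∨ b ≤ c) :
    ∃ k ∈ s, k + 1 ∈ s ∧ d k = a ∧ d (k + 1) = b := by
  obtain ⟨k, hk, rfl⟩ := ha
  obtain ⟨l, hl, rfl⟩ := hb
  have hkl : k < l := (hd.lt_iff_lt hk hl).mp hab
  have hk' : k + 1 ∈ s := hs.out hk hl ⟨k.le_succ, hkl⟩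
  have hl_le : l ≤ k + 1 := (hd.le_iff_le hl hk').mp <|
    (hgap _ (mem_image_of_mem d hk')).resolve_left (hd hk hk' k.lt_succ_self).not_ge
  obtain rfl : l = k + 1 := hl_le.antisymm hkl
  exact ⟨k, hk, hl, rfl, rfl⟩

section Generation

variable {X ι : Type*} [Finite X] {idx : X → ι} {R : ℕ} {d : ℕ → ℕ}

theorem IsRankCompanion.mem_sxp_union_bset_of_swap [DecidableEq ι] {t : Function.End X} {p q : ι}
    (ht : IsRankCompanion idx (Equiv.swap p q) t) (hidx : Surjective idx)
    (hd : StrictMonoOn d (Icc 1 R))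
    (hsizes : range (fun i => (idx ⁻¹' {i}).ncard) = d '' Icc 1 R)
    (hpq : (idx ⁻¹' {p}).ncard ≤ (idx ⁻¹' {q}).ncard)
    (hgap : ∀ m, (idx ⁻¹' {m}).ncard ≤ (idx ⁻¹' {p}).ncard ∨
      (idx ⁻¹' {q}).ncard ≤ (idx ⁻¹' {m}).ncard) :
    t ∈ SXP (Setoid.ker idx) ∪ Bset (Setoid.ker idx) R d := by
  rcases hpq.eq_or_lt with heq | hlt
  · refine Or.inl (mem_sxp_ker (ht.bijective fun i => ?_) ht.semiconj)
    simp only [Equiv.swap_apply_def]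
    grind
  · have hsize (i : ι) : (idx ⁻¹' {i}).ncard ∈ d '' Icc 1 R := hsizes ▸ mem_range_self i
    obtain ⟨k, hk, hk', hdk, hdk'⟩ := exists_consecutive_of_strictMonoOn hd ordConnected_Icc
      (hsize p) (hsize q) hlt (by rw [← hsizes]; exact forall_mem_range.mpr hgap)
    refine Or.inr ⟨k, hk.1, hk'.2, ?_⟩
    rw [hdk, hdk']
    exact ht.memB_of_swap hidx hpq

theorem exists_mem_closure_isRankCompanion (hidx : Surjective idx) (hd : StrictMonoOn d (Icc 1 R))
    (hsizes : range (fun i => (idx ⁻¹' {i}).ncard) = d '' Icc 1 R) (σ : Equiv.Perm ι) :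
    ∃ t ∈ Submonoid.closure (SXP (Setoid.ker idx) ∪ Bset (Setoid.ker idx) R d),
      IsRankCompanion idx σ t := by
  classical
  have : Finite ι := .of_surjective idx hidx
  induction σ using perm_induction_of_weight (w := fun i => (idx ⁻¹' {i}).ncard) with
  | one => exact ⟨1, one_mem _, .one⟩
  | mul hτ hσ h =>
    obtain ⟨g, hg_mem, hg⟩ := hτ
    obtain ⟨t, ht_mem, ht⟩ := hσ
    obtain ⟨u, hu, hgut⟩ := hg.exists_mem_sxp_mul ht h
    exact ⟨_, mul_mem (mul_mem hg_mem (Submonoid.subset_closure (Or.inl hu))) ht_mem, hgut⟩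
  | swap p q hpq hgap =>
    obtain ⟨t, ht⟩ := IsRankCompanion.exists_of_surjective hidx (Equiv.swap p q)
    exact ⟨t, Submonoid.subset_closure
      (ht.mem_sxp_union_bset_of_swap hidx hd hsizes hpq hgap), ht⟩

end Generation

theorem companion_exists_general {X : Type*} [Finite X] (r : Setoid X)
    (N : ℕ) (Pb : Fin N → Set X)
    (hPmem : ∀ i, Pb i ∈ Setoid.classes r)
    (hPinj : Function.Injective Pb)
    (hPsurj : ∀ B ∈ Setoid.classes r, ∃ i, Pb i = B)
    (R : ℕ) (d : ℕ → ℕ)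
    (hdmono : ∀ i, 1 ≤ i → i + 1 ≤ R → d i < d (i + 1))
    (hdsizes : ∀ s, blockCount r s ≠ 0 ↔ ∃ i, 1 ≤ i ∧ i ≤ R ∧ d i = s)
    (σ : Equiv.Perm (Fin N)) :
    ∃ g ∈ (Submonoid.closure (SXP r ∪ Bset r R d) : Set (Function.End X)),
      IsCompanion r Pb σ g := by
  obtain ⟨idx, hidx, rfl, rfl⟩ := exists_index_of_enumeration hPmem hPinj hPsurj
  have hd : StrictMonoOn d (Icc 1 R) :=
    strictMonoOn_of_lt_add_one ordConnected_Icc fun k _ hk hk' => hdmono k hk.1 hk'.2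
  have hsizes : range (fun i => (idx ⁻¹' {i}).ncard) = d '' Icc 1 R := by
    ext s
    simp only [mem_range, mem_image, mem_Icc, and_assoc, ← hdsizes, blockCount_ker_ne_zero_iff hidx]
  obtain ⟨g, hg_mem, hg⟩ := exists_mem_closure_isRankCompanion hidx hd hsizes σ
  exact ⟨g, hg_mem, hg.isCompanion hidx⟩

/-- (Blocks are enumerated as `Pb 0, …, Pb (N-1)` with
nondecreasing sizes, and `d 1 < … < d R` are the distinct block sizes; `F` is
the index permutation induced by `f ∈ Σ(X,P)`.)  The submonoid generated by
`S(X,P) ∪ ℬ` contains a companion of `f̄`. -/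
theorem companion_exists {X : Type*} [Fintype X] [Nonempty X] (r : Setoid X)
    (N : ℕ) (Pb : Fin N → Set X)
    (hPmem : ∀ i, Pb i ∈ Setoid.classes r)
    (hPinj : Function.Injective Pb)
    (hPsurj : ∀ B ∈ Setoid.classes r, ∃ i, Pb i = B)
    (hPmono : Monotone fun i => (Pb i).ncard)
    (R : ℕ) (d : ℕ → ℕ)
    (hdmono : ∀ i, 1 ≤ i → i + 1 ≤ R → d i < d (i + 1))
    (hdsizes : ∀ s, blockCount r s ≠ 0 ↔ ∃ i, 1 ≤ i ∧ i ≤ R ∧ d i = s)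
    (f : Function.End X) (hf : f ∈ SigmaSet r)
    (F : Fin N → Fin N) (hF : ∀ i, f '' Pb i ⊆ Pb (F i)) :
    ∃ g ∈ (Submonoid.closure (SXP r ∪ Bset r R d) : Set (Function.End X)),
      IsCompanion r Pb F g :=
  companion_exists_general r N Pb hPmem hPinj hPsurj R d hdmono hdsizes
    (Equiv.ofBijective F (bijective_of_mem_sigmaSet hPmem hPinj hPsurj hf hF))
end
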